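/- Under Assumptions A1 and A2, for every γ ≥ 0, every integer q ≥ 1, every function g ∈ L_{W^γ} (with W = log V) and every n ≥ 1, E_π[|S_n|^{2q}] ≤ μ_q·(Var_π(S_n))^q + C_0^{2q}·(2γ)^{2γq}·‖ḡ‖_{W^γ}^{2q}·Σ_{u=1}^{q−1} B_γ(u,q)·n^u / (ρ^{u/2}·(log(1/ρ))^{2q−u}), where C_0 = 2cπ(V) (with the convention 0^0 = 1). -/

import Mathlib

open MeasureTheory ProbabilityTheory Finset
open scoped ENNReal Classical

noncomputable section

/-- `n`-th iterate of a Markov kernel. -/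
def kIter {Y : Type*} [MeasurableSpace Y] (Q : ProbabilityTheory.Kernel Y Y) :
    ℕ → ProbabilityTheory.Kernel Y Y
  | 0 => ProbabilityTheory.Kernel.id
  | n + 1 => (kIter Q n).comp Q

/-- `U`-weighted total variation distance between two finite measures:
`∫ U d|μ - ν|`, via the Jordan decomposition of `μ - ν`. -/
def wTV {Y : Type*} [MeasurableSpace Y] (U : Y → ℝ) (μ ν : Measure Y) : ℝ :=
  (∫ x, U x ∂(μ - ν)) + ∫ x, U x ∂(ν - μ)

/-- `U`-weighted sup norm `‖g‖_U = sup_x |g x| / U x`. -/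
def vnorm {Y : Type*} (U : Y → ℝ) (g : Y → ℝ) : ℝ := ⨆ x, |g x| / U x

/-- Membership in the class `L_U`: measurable with finite `U`-weighted sup norm. -/
structure MemL {Y : Type*} [MeasurableSpace Y] (U : Y → ℝ) (g : Y → ℝ) : Prop where
  meas : Measurable g
  bdd : BddAbove (Set.range fun x => |g x| / U x)

/-- `(Xs n)` is a Markov chain with initial distribution `ξ` and Markov kernel `Q`:
the law of `Xs 0` is `ξ` and, conditionally on the past up to time `n`, the
distribution of `Xs (n+1)` is `Q (Xs n)`. -/
structure IsMarkovChain {X : Type*} [MeasurableSpace X] {Ω : Type*} [MeasurableSpace Ω]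
    (P : Measure Ω) (Xs : ℕ → Ω → X) (ξ : Measure X)
    (Q : ProbabilityTheory.Kernel X X) : Prop where
  meas : ∀ n, Measurable (Xs n)
  init : P.map (Xs 0) = ξ
  markov : ∀ (n : ℕ) (f : X → ℝ), Measurable f → (∀ x, |f x| ≤ 1) →
    (P[fun ω => f (Xs (n + 1) ω) |
        ⨆ i ∈ Finset.range (n + 1), MeasurableSpace.comap (Xs i) inferInstance])
      =ᵐ[P] fun ω => ∫ y, f y ∂(Q (Xs n ω))

/-- The combinatorial coefficient `B_γ(u,q)`. -/
def Bcoef (γ : ℝ) (u q : ℕ) : ℝ :=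
  ((2 * q).factorial : ℝ) / (u.factorial : ℝ) *
    ∑ k ∈ Finset.univ.filter
        (fun k : Fin u → Fin (2 * q + 1) =>
          (∀ i, 2 ≤ (k i : ℕ)) ∧ ∑ i, (k i : ℕ) = 2 * q),
      ∏ i, ((k i : ℕ).factorial : ℝ) ^ (γ + 2)

/-- The `2q`-th moment `(2q)!/(q! 2^q)` of the standard Gaussian. -/
def gaussMoment (q : ℕ) : ℝ := ((2 * q).factorial : ℝ) / ((q.factorial : ℝ) * 2 ^ q)

/-!
The generating series `F n = ∑ₖ E[Sₙᵏ] / k! * zᵏ` of the moments of the partial sums satisfies, by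
the Markov property, a renewal equation `F (n + 1) = F n + ∑_{l ≤ n} b l * F (n - l)`, where
`b l = π(ψ l) - 1_{l = 0}` for the iterates `ψ 0 = e^{zY}`, `ψ (l + 1) = e^{zY} * (Q - π)(ψ l)`.
The coefficients of `b l` of orders `0` and `1` vanish. Interpolating geometric ergodicity between
`V⁰` and `V¹` shows that `Q ^ j - π` contracts functions of size `V^α` at the rate `ρ^{αj}`, so
`∑ₗ |b l|` is dominated coefficientwise by an explicit series `D` of order two.

Comparing with the Gaussian series `exp(vₙ z²)`, where `vₙ = E[Sₙ²] / 2`, the renewal equation gives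
`F n - exp(vₙ z²) ≪ exp(n (D + δ z⁴)) - exp(n d z²)` coefficientwise, where `d z²` is the quadratic
term of `D` and `δ` accounts for the lag between the growth of `vₙ` and its renewal increments. In
the coefficient of `z^{2q}` the term of degree `q` in `n` cancels exactly, which leaves the powers
`n ^ u` with `u < q`, indexed by the compositions of `2q` into `u` parts of size at least two.
-/

namespace RosenthalLog

section CoefficientwiseOrder

open PowerSeries

variable {K : Type*} [Field K] [LinearOrder K]

/-- Cauchy's majorant relation `f ≪ g`. -/
def MajorizedBy (f g : K⟦X⟧) : Prop := ∀ m, |coeff m f| ≤ coeff m g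

/-- The least majorant of `f`. -/
def absCoeffs (f : K⟦X⟧) : K⟦X⟧ := mk fun m ↦ |coeff m f|

lemma majorizedBy_absCoeffs (f : K⟦X⟧) : MajorizedBy f (absCoeffs f) := fun m ↦ by
  rw [absCoeffs, coeff_mk]

variable [IsStrictOrderedRing K]

variable (K) in
/-- The power series with nonnegative coefficients; membership of `g - f` is the coefficientwise
inequality `f ≤ g`. -/
def nonnegCoeffs : Subsemiring K⟦X⟧ where
  carrier := {f | ∀ m, 0 ≤ coeff m f}
  mul_mem' hf hg m := by
    rw [coeff_mul]
    exact sum_nonneg fun p _ ↦ mul_nonneg (hf p.1) (hg p.2)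
  one_mem' m := by
    rw [coeff_one]
    split_ifs <;> simp
  add_mem' hf hg m := by
    rw [map_add]
    exact add_nonneg (hf m) (hg m)
  zero_mem' m := by simp

lemma C_mem_nonnegCoeffs {a : K} (ha : 0 ≤ a) : C a ∈ nonnegCoeffs K := fun m ↦ by
  rw [coeff_C]
  split_ifs <;> simp [ha]

lemma X_pow_mem_nonnegCoeffs (k : ℕ) : (X : K⟦X⟧) ^ k ∈ nonnegCoeffs K := fun m ↦ by
  rw [coeff_X_pow]
  split_ifs <;> simp

lemma MajorizedBy.refl_of_mem {f : K⟦X⟧} (hf : f ∈ nonnegCoeffs K) : MajorizedBy f f :=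
  fun m ↦ (abs_of_nonneg (hf m)).le

namespace MajorizedBy

variable {f f' g g' : K⟦X⟧}

lemma add (h : MajorizedBy f g) (h' : MajorizedBy f' g') : MajorizedBy (f + f') (g + g') :=
  fun m ↦ by
    simp only [map_add]
    exact (abs_add_le _ _).trans (add_le_add (h m) (h' m))

lemma sub (h : MajorizedBy f g) (h' : MajorizedBy f' g') : MajorizedBy (f - f') (g + g') :=
  fun m ↦ by
    simp only [map_add, map_sub]
    exact (abs_sub _ _).trans (add_le_add (h m) (h' m))

lemma mul (h : MajorizedBy f g) (h' : MajorizedBy f' g') : MajorizedBy (f * f') (g * g') :=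
  fun m ↦ by
    rw [coeff_mul, coeff_mul]
    refine (abs_sum_le_sum_abs _ _).trans (sum_le_sum fun p _ ↦ ?_)
    rw [abs_mul]
    exact mul_le_mul (h _) (h' _) (abs_nonneg _) ((abs_nonneg _).trans (h _))

lemma sum {ι : Type*} {s : Finset ι} {f g : ι → K⟦X⟧}
    (h : ∀ i ∈ s, MajorizedBy (f i) (g i)) : MajorizedBy (∑ i ∈ s, f i) (∑ i ∈ s, g i) :=
  fun m ↦ by
    rw [map_sum, map_sum]
    exact (abs_sum_le_sum_abs _ _).trans (sum_le_sum fun i hi ↦ h i hi m)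

lemma mono (h : MajorizedBy f g) (h' : g' - g ∈ nonnegCoeffs K) : MajorizedBy f g' := fun m ↦
  (h m).trans (sub_nonneg.1 (by simpa only [map_sub] using h' m))

end MajorizedBy

lemma majorizedBy_C_mul_X_pow (a : K) (k : ℕ) :
    MajorizedBy (C a * X ^ k : K⟦X⟧) (C |a| * X ^ k) := fun m ↦ by
  rw [coeff_C_mul, coeff_C_mul, coeff_X_pow]
  split_ifs <;> simp

end CoefficientwiseOrder

section SubsemiringPow

variable {R : Type*} [CommRing R] {S : Subsemiring R} {a b : R}

lemma pow_sub_pow_mem (hb : b ∈ S) (hab : a - b ∈ S) (n : ℕ) : a ^ n - b ^ n ∈ S := by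
  rw [← geom_sum₂_mul]
  have ha : a ∈ S := by simpa using add_mem hab hb
  exact mul_mem (sum_mem fun i _ ↦ mul_mem (pow_mem ha _) (pow_mem hb _)) hab

lemma pow_sub_pow_sub_mem (hb : b ∈ S) (hab : a - b ∈ S) (ha1 : a - 1 ∈ S) {m n : ℕ}
    (hmn : m ≤ n) : a ^ n - b ^ n - (a ^ m - b ^ m) ∈ S := by
  induction n, hmn using Nat.le_induction with
  | base => simp
  | succ n _ ih =>
    have step : a ^ (n + 1) - b ^ (n + 1) - (a ^ m - b ^ m) =
        (a ^ n - b ^ n - (a ^ m - b ^ m)) + (a ^ n - b ^ n) * (a - 1) + b ^ n * (a - b) := by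
      ring
    rw [step]
    exact add_mem (add_mem ih (mul_mem (pow_sub_pow_mem hb hab n) ha1))
      (mul_mem (pow_mem hb n) hab)

lemma pow_sub_pow_mem_of_le (ha1 : a - 1 ∈ S) {m n : ℕ} (hmn : m ≤ n) : a ^ n - a ^ m ∈ S := by
  have ha : a ∈ S := by simpa using add_mem ha1 (one_mem S)
  have step : a ^ n - a ^ m = a ^ m * (a ^ (n - m) - 1 ^ (n - m)) := by
    rw [mul_sub, ← pow_add, Nat.add_sub_cancel' hmn, one_pow, mul_one]
  rw [step]
  exact mul_mem (pow_mem ha m) (pow_sub_pow_mem (one_mem S) ha1 _)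

end SubsemiringPow

section FormalExponential

open PowerSeries
open scoped Nat

variable {K : Type*} [Field K] [CharZero K] {f g : K⟦X⟧}

lemma coeff_exp_subst (hf : constantCoeff f = 0) {m N : ℕ} (h : m < N) :
    coeff m ((exp K).subst f) = ∑ u ∈ range N, coeff m (f ^ u) / (u ! : K) := by
  rw [coeff_subst' (.of_constantCoeff_zero' hf), finsum_eq_sum_of_support_subset (s := range N)]
  · refine sum_congr rfl fun u _ ↦ ?_
    rw [coeff_exp, smul_eq_mul, map_div₀, map_one, map_natCast, one_div_mul_eq_div]
  · intro u hu
    by_contra huN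
    refine hu ?_
    have hmu : m < u := h.trans_le (by simpa using huN)
    simp only [coeff_of_lt_order m ((Nat.cast_lt.2 hmu).trans_le
      (le_order_pow_of_constantCoeff_eq_zero u hf)), smul_zero]

lemma constantCoeff_exp_subst (hf : constantCoeff f = 0) :
    constantCoeff ((exp K).subst f) = 1 := by
  rw [← coeff_zero_eq_constantCoeff_apply, coeff_exp_subst hf zero_lt_one]
  simp

lemma derivative_exp_subst (hf : constantCoeff f = 0) :
    d⁄dX K ((exp K).subst f) = (exp K).subst f * d⁄dX K f := by
  rw [derivative_subst (.of_constantCoeff_zero' hf), derivative_exp]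

lemma exp_subst_mul_exp_subst_neg (hf : constantCoeff f = 0) :
    (exp K).subst f * (exp K).subst (-f) = 1 := by
  have hf' : constantCoeff (-f) = 0 := by rw [map_neg, hf, neg_zero]
  refine derivative.ext ?_ ?_
  · rw [Derivation.leibniz, derivative_exp_subst hf, derivative_exp_subst hf', map_neg,
      derivative_one, smul_eq_mul, smul_eq_mul]
    ring
  · simp only [map_mul, constantCoeff_exp_subst hf, constantCoeff_exp_subst hf', map_one,
      mul_one]

lemma exp_subst_add (hf : constantCoeff f = 0) (hg : constantCoeff g = 0) :
    (exp K).subst (f + g) = (exp K).subst f * (exp K).subst g := by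
  have hfg : constantCoeff (f + g) = 0 := by rw [map_add, hf, hg, add_zero]
  have hfg' : constantCoeff (-(f + g)) = 0 := by rw [map_neg, hfg, neg_zero]
  have key : (exp K).subst f * (exp K).subst g * (exp K).subst (-(f + g)) = 1 := by
    refine derivative.ext ?_ ?_
    · simp only [Derivation.leibniz, derivative_exp_subst hf, derivative_exp_subst hg,
        derivative_exp_subst hfg', map_neg, map_add, derivative_one, smul_eq_mul]
      ring
    · simp only [map_mul, constantCoeff_exp_subst hf, constantCoeff_exp_subst hg,
        constantCoeff_exp_subst hfg', map_one, mul_one]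
  calc (exp K).subst (f + g)
      = (exp K).subst (f + g) *
          ((exp K).subst f * (exp K).subst g * (exp K).subst (-(f + g))) := by rw [key, mul_one]
    _ = (exp K).subst f * (exp K).subst g *
          ((exp K).subst (f + g) * (exp K).subst (-(f + g))) := by ring
    _ = (exp K).subst f * (exp K).subst g := by
          rw [exp_subst_mul_exp_subst_neg hfg, mul_one]

lemma exp_subst_nsmul (hf : constantCoeff f = 0) (n : ℕ) :
    (exp K).subst (n • f) = (exp K).subst f ^ n := by
  induction n with
  | zero =>
    rw [zero_nsmul, pow_zero, subst_zero_eq_C_constantCoeff, constantCoeff_exp]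
    simp
  | succ n ih =>
    have hnf : constantCoeff (n • f) = 0 := by rw [map_nsmul, hf, smul_zero]
    rw [succ_nsmul, exp_subst_add hnf hf, ih, pow_succ]

lemma exp_subst_smul_X_sq (v : K) :
    (exp K).subst (v • (X : K⟦X⟧) ^ 2) = expand 2 two_ne_zero (rescale v (exp K)) := by
  rw [rescale_eq_subst, expand_apply,
    subst_comp_subst_apply (.smul_X' v) (.X_pow two_ne_zero), subst_smul (.X_pow two_ne_zero),
    subst_X (.X_pow two_ne_zero)]

end FormalExponential

section GaussianSeries

open PowerSeries
open scoped Nat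

lemma exists_mem_uIcc_pow_succ_sub_pow_succ (a b : ℝ) (m : ℕ) :
    ∃ ξ ∈ Set.uIcc a b, a ^ (m + 1) - b ^ (m + 1) = (m + 1) * ξ ^ m * (a - b) := by
  wlog hab : a ≤ b generalizing a b
  · obtain ⟨ξ, hξ, h⟩ := this b a (le_of_not_ge hab)
    exact ⟨ξ, Set.uIcc_comm a b ▸ hξ, by linear_combination -h⟩
  obtain rfl | hab := hab.eq_or_lt
  · exact ⟨a, Set.left_mem_uIcc, by simp⟩
  obtain ⟨ξ, hξ, h⟩ := exists_deriv_eq_slope (fun x : ℝ ↦ x ^ (m + 1)) hab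
    (by fun_prop) (by fun_prop)
  refine ⟨ξ, Set.Ioo_subset_Icc_self.trans Set.Icc_subset_uIcc hξ, ?_⟩
  rw [deriv_pow_field, eq_div_iff (sub_pos.2 hab).ne'] at h
  push_cast [Nat.add_sub_cancel] at h
  linear_combination h

lemma abs_pow_succ_sub_pow_succ_le {x z B η : ℝ} (hx : |x| ≤ B) (hz : |z| ≤ B)
    (hxz : |x - z| ≤ η) (m : ℕ) : |x ^ (m + 1) - z ^ (m + 1)| ≤ η * (m + 1) * B ^ m :=
  (abs_pow_sub_pow_le x z (m + 1)).trans <| by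
    rw [Nat.add_sub_cancel, Nat.cast_succ]
    have hη : 0 ≤ η := (abs_nonneg _).trans hxz
    gcongr
    exact max_le hx hz

/-- By the mean value theorem the difference of the powers of `a` and `b` is
`∑ β i` times a power of an intermediate point, which is within `η i` of `z i`. -/
lemma abs_pow_div_factorial_sub_sum_le {ι : Type*} {s : Finset ι} {β z η : ι → ℝ} {a b B : ℝ}
    (hab : a - b = ∑ i ∈ s, β i) (ha : |a| ≤ B) (hb : |b| ≤ B) (hz : ∀ i ∈ s, |z i| ≤ B)
    (haz : ∀ i ∈ s, |a - z i| ≤ η i) (hbz : ∀ i ∈ s, |b - z i| ≤ η i) (m : ℕ) :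
    |a ^ (m + 2) / (m + 2)! - b ^ (m + 2) / (m + 2)! -
        ∑ i ∈ s, β i * (z i ^ (m + 1) / (m + 1)!)| ≤
      (∑ i ∈ s, |β i| * η i) * (B ^ m / m !) := by
  obtain ⟨ξ, hξ, hξab⟩ := exists_mem_uIcc_pow_succ_sub_pow_succ a b (m + 1)
  have mem_of_mem {c r : ℝ} (hac : |a - c| ≤ r) (hbc : |b - c| ≤ r) : |ξ - c| ≤ r := by
    simp only [← Real.dist_eq, ← Metric.mem_closedBall, Real.closedBall_eq_Icc] at hac hbc ⊢
    exact Set.ordConnected_Icc.uIcc_subset hac hbc hξ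
  have hξB : |ξ| ≤ B := by simpa using mem_of_mem (c := 0) (by simpa using ha) (by simpa using hb)
  have hdiff : a ^ (m + 2) / (m + 2)! - b ^ (m + 2) / (m + 2)! -
      ∑ i ∈ s, β i * (z i ^ (m + 1) / (m + 1)!) =
      ∑ i ∈ s, β i * ((ξ ^ (m + 1) - z i ^ (m + 1)) / (m + 1)!) := by
    simp only [sub_div, mul_sub, sum_sub_distrib, ← sum_mul]
    rw [← sub_div, hξab, hab, Nat.factorial_succ (m + 1)]
    push_cast
    field_simp
  rw [hdiff, sum_mul]
  refine (abs_sum_le_sum_abs _ _).trans (sum_le_sum fun i hi ↦ ?_)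
  rw [abs_mul, abs_div, Nat.abs_cast, mul_assoc]
  refine mul_le_mul_of_nonneg_left ?_ (abs_nonneg _)
  calc |ξ ^ (m + 1) - z i ^ (m + 1)| / (m + 1)!
      ≤ η i * (m + 1) * B ^ m / (m + 1)! := by
        gcongr
        exact abs_pow_succ_sub_pow_succ_le hξB (hz i hi) (mem_of_mem (haz i hi) (hbz i hi)) m
    _ = η i * (B ^ m / m !) := by
        rw [Nat.factorial_succ]
        push_cast
        field_simp

lemma coeff_rescale_exp (v : ℝ) (m : ℕ) : coeff m (rescale v (exp ℝ)) = v ^ m / m ! := by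
  rw [coeff_rescale, coeff_exp, map_div₀, map_one, map_natCast, mul_one_div]

lemma majorizedBy_rescale_exp_sub {ι : Type*} {s : Finset ι} {β z η : ι → ℝ} {a b B δ : ℝ}
    (hab : a - b = ∑ i ∈ s, β i) (ha : |a| ≤ B) (hb : |b| ≤ B) (hz : ∀ i ∈ s, |z i| ≤ B)
    (haz : ∀ i ∈ s, |a - z i| ≤ η i) (hbz : ∀ i ∈ s, |b - z i| ≤ η i)
    (hδ : ∑ i ∈ s, |β i| * η i ≤ δ) :
    MajorizedBy (rescale a (exp ℝ) - rescale b (exp ℝ) -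
        ∑ i ∈ s, C (β i) * (X * rescale (z i) (exp ℝ)))
      (C δ * (X ^ 2 * rescale B (exp ℝ))) := by
  intro m
  simp only [map_sub, map_sum, coeff_C_mul, coeff_rescale_exp]
  match m with
  | 0 => simp [coeff_X_pow_mul']
  | 1 => simp [coeff_X_pow_mul', coeff_succ_X_mul, hab]
  | m + 2 =>
    simp only [coeff_succ_X_mul, coeff_X_pow_mul, coeff_rescale_exp]
    have hB : 0 ≤ B := (abs_nonneg a).trans ha
    exact (abs_pow_div_factorial_sub_sum_le hab ha hb hz haz hbz m).trans (by gcongr)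

/-- The series `exp(v X²)`: the moments `E[Zᵏ] / k!` of a centred Gaussian variable `Z` of
variance `2v`. -/
def gaussianSeries (v : ℝ) : ℝ⟦X⟧ := (exp ℝ).subst (C v * X ^ 2)

lemma constantCoeff_C_mul_X_sq (v : ℝ) : constantCoeff (C v * X ^ 2 : ℝ⟦X⟧) = 0 := by simp

lemma gaussianSeries_eq_expand (v : ℝ) :
    gaussianSeries v = expand 2 two_ne_zero (rescale v (exp ℝ)) := by
  rw [gaussianSeries, ← smul_eq_C_mul, exp_subst_smul_X_sq]

lemma coeff_two_mul_gaussianSeries (v : ℝ) (q : ℕ) :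
    coeff (2 * q) (gaussianSeries v) = v ^ q / q ! := by
  rw [gaussianSeries_eq_expand, coeff_expand_mul, coeff_rescale_exp]

lemma gaussianSeries_zero : gaussianSeries 0 = 1 := by
  simp [gaussianSeries_eq_expand]

lemma gaussianSeries_nat_mul (n : ℕ) (v : ℝ) :
    gaussianSeries (n * v) = gaussianSeries v ^ n := by
  rw [gaussianSeries, gaussianSeries, ← exp_subst_nsmul (constantCoeff_C_mul_X_sq v), map_mul,
    map_natCast, nsmul_eq_mul, mul_assoc]

lemma MajorizedBy.expand_two {f g : ℝ⟦X⟧} (h : MajorizedBy f g) :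
    MajorizedBy (expand 2 two_ne_zero f) (expand 2 two_ne_zero g) := fun m ↦ by
  rw [coeff_expand, coeff_expand]
  split_ifs
  · exact h _
  · simp

lemma majorizedBy_gaussianSeries_sub {ι : Type*} {s : Finset ι} {β z η : ι → ℝ} {a b B δ : ℝ}
    (hab : a - b = ∑ i ∈ s, β i) (ha : |a| ≤ B) (hb : |b| ≤ B) (hz : ∀ i ∈ s, |z i| ≤ B)
    (haz : ∀ i ∈ s, |a - z i| ≤ η i) (hbz : ∀ i ∈ s, |b - z i| ≤ η i)
    (hδ : ∑ i ∈ s, |β i| * η i ≤ δ) :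
    MajorizedBy (gaussianSeries a - gaussianSeries b -
        ∑ i ∈ s, C (β i) * X ^ 2 * gaussianSeries (z i))
      (C δ * X ^ 4 * gaussianSeries B) := by
  have h := (majorizedBy_rescale_exp_sub hab ha hb hz haz hbz hδ).expand_two
  simp only [map_sub, map_sum, map_mul, map_pow, expand_X, expand_C, ← gaussianSeries_eq_expand,
    ← pow_mul, ← mul_assoc] at h
  exact h

end GaussianSeries

section Renewal

open PowerSeries
open scoped Nat

/-- The renewal equation `F₀ = 1`, `Fₙ₊₁ = Fₙ + ∑_{l ≤ n} b_l Fₙ₋ₗ` for power series, with a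
kernel `b` of order at least two whose coefficients are absolutely summable over the lag `l`:
the sums are bounded by `D`, and `δ` bounds the lag-weighted sum of the second coefficients. -/
structure IsDominatedRenewal (F b : ℕ → ℝ⟦X⟧) (D : ℝ⟦X⟧) (δ : ℝ) : Prop where
  zero : F 0 = 1
  succ : ∀ n, F (n + 1) = F n + ∑ l ∈ range (n + 1), b l * F (n - l)
  X_sq_dvd : X ^ 2 ∣ D
  sum_abs_coeff_le : ∀ k N, ∑ l ∈ range N, |coeff k (b l)| ≤ coeff k D
  sum_lag_le : ∀ N, ∑ l ∈ range N, |coeff 2 (b l)| * ((l + 1) * coeff 2 D) ≤ δ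

/-- `exp(D + δ X⁴)`: its `n`-th power dominates the solution `Fₙ` of the renewal equation. -/
def growthFactor (D : ℝ⟦X⟧) (δ : ℝ) : ℝ⟦X⟧ := (exp ℝ).subst (D + C δ * X ^ 4)

lemma exp_subst_sub_one_sub_mem {f : ℝ⟦X⟧} (hf : f ∈ nonnegCoeffs ℝ)
    (hf0 : constantCoeff f = 0) : (exp ℝ).subst f - 1 - f ∈ nonnegCoeffs ℝ := fun m ↦ by
  rw [map_sub, map_sub, coeff_exp_subst hf0 (show m < m + 2 by lia), sum_range_succ',
    sum_range_succ']
  simp only [pow_zero, pow_one, zero_add, Nat.factorial_zero, Nat.factorial_one, Nat.cast_one,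
    div_one, add_sub_cancel_right]
  exact sum_nonneg fun u _ ↦ div_nonneg (pow_mem hf _ m) (by positivity)

lemma gaussianSeries_mem {v : ℝ} (hv : 0 ≤ v) : gaussianSeries v ∈ nonnegCoeffs ℝ := fun m ↦ by
  rw [gaussianSeries_eq_expand, coeff_expand]
  split_ifs
  · rw [coeff_rescale_exp]
    positivity
  · rfl

lemma gaussianSeries_sub_one_mem {v : ℝ} (hv : 0 ≤ v) :
    gaussianSeries v - 1 - C v * X ^ 2 ∈ nonnegCoeffs ℝ :=
  exp_subst_sub_one_sub_mem (mul_mem (C_mem_nonnegCoeffs hv) (X_pow_mem_nonnegCoeffs 2))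
    (constantCoeff_C_mul_X_sq v)

namespace IsDominatedRenewal

variable {F b : ℕ → ℝ⟦X⟧} {D : ℝ⟦X⟧} {δ : ℝ}

section Bounds

variable (h : IsDominatedRenewal F b D δ)
include h

lemma domination_mem : D ∈ nonnegCoeffs ℝ := fun k ↦ by simpa using h.sum_abs_coeff_le k 0

lemma nonneg : 0 ≤ δ := by simpa using h.sum_lag_le 0

lemma exponent_mem : D + C δ * X ^ 4 ∈ nonnegCoeffs ℝ :=
  add_mem h.domination_mem (mul_mem (C_mem_nonnegCoeffs h.nonneg) (X_pow_mem_nonnegCoeffs 4))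

lemma X_sq_dvd_exponent : X ^ 2 ∣ D + C δ * X ^ 4 :=
  dvd_add h.X_sq_dvd (dvd_mul_of_dvd_right (pow_dvd_pow X (by norm_num)) _)

lemma constantCoeff_exponent : constantCoeff (D + C δ * X ^ 4) = 0 := by
  rw [← coeff_zero_eq_constantCoeff_apply]
  exact X_pow_dvd_iff.1 h.X_sq_dvd_exponent 0 two_pos

lemma growthFactor_sub_one_sub_mem :
    growthFactor D δ - 1 - (D + C δ * X ^ 4) ∈ nonnegCoeffs ℝ :=
  exp_subst_sub_one_sub_mem h.exponent_mem h.constantCoeff_exponent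

lemma growthFactor_sub_one_mem : growthFactor D δ - 1 ∈ nonnegCoeffs ℝ := by
  simpa only [sub_add_cancel] using add_mem h.growthFactor_sub_one_sub_mem h.exponent_mem

lemma growthFactor_mem : growthFactor D δ ∈ nonnegCoeffs ℝ := by
  simpa only [sub_add_cancel] using add_mem h.growthFactor_sub_one_mem (one_mem _)

lemma residual_mem : D - C (coeff 2 D) * X ^ 2 ∈ nonnegCoeffs ℝ := fun m ↦ by
  rw [map_sub, coeff_C_mul, coeff_X_pow]
  split_ifs with hm
  · rw [hm, mul_one, sub_self]
  · simpa using h.domination_mem m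

lemma growthFactor_sub_gaussianSeries_mul_mem :
    growthFactor D δ - gaussianSeries (coeff 2 D) *
      (1 + (D - C (coeff 2 D) * X ^ 2) + C δ * X ^ 4) ∈ nonnegCoeffs ℝ := by
  set R := D - C (coeff 2 D) * X ^ 2 + C δ * X ^ 4 with hR
  have hR0 : constantCoeff R = 0 := by
    rw [hR, sub_add_eq_add_sub, map_sub, h.constantCoeff_exponent, constantCoeff_C_mul_X_sq,
      sub_zero]
  have hfactor : growthFactor D δ = gaussianSeries (coeff 2 D) * (exp ℝ).subst R := by
    rw [gaussianSeries, ← exp_subst_add (constantCoeff_C_mul_X_sq _) hR0, growthFactor, hR]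
    congr 1
    ring
  rw [hfactor, add_assoc, ← hR, ← mul_sub, ← sub_sub]
  exact mul_mem (gaussianSeries_mem (h.domination_mem 2)) (exp_subst_sub_one_sub_mem
    (add_mem h.residual_mem (mul_mem (C_mem_nonnegCoeffs h.nonneg) (X_pow_mem_nonnegCoeffs 4)))
    hR0)

lemma growthFactor_sub_gaussianSeries_mem :
    growthFactor D δ - gaussianSeries (coeff 2 D) ∈ nonnegCoeffs ℝ := by
  have hG := gaussianSeries_mem (h.domination_mem 2)
  have hδ := mul_mem (C_mem_nonnegCoeffs h.nonneg) (X_pow_mem_nonnegCoeffs 4)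
  convert add_mem h.growthFactor_sub_gaussianSeries_mul_mem
    (mul_mem hG (add_mem h.residual_mem hδ)) using 1
  ring

end Bounds

/-- The majorant of `Fₙ - exp(vₙ X²)`, `vₙ` being the second coefficient of `Fₙ`. -/
def errorMajorant (D : ℝ⟦X⟧) (δ : ℝ) (n : ℕ) : ℝ⟦X⟧ :=
  growthFactor D δ ^ n - gaussianSeries (coeff 2 D) ^ n

section Comparison

variable (h : IsDominatedRenewal F b D δ)
include h

lemma errorMajorant_mem (n : ℕ) : errorMajorant D δ n ∈ nonnegCoeffs ℝ :=
  pow_sub_pow_mem (gaussianSeries_mem (h.domination_mem 2))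
    h.growthFactor_sub_gaussianSeries_mem n

lemma errorMajorant_sub_mem {m n : ℕ} (hmn : m ≤ n) :
    errorMajorant D δ n - errorMajorant D δ m ∈ nonnegCoeffs ℝ :=
  pow_sub_pow_sub_mem (gaussianSeries_mem (h.domination_mem 2))
    h.growthFactor_sub_gaussianSeries_mem h.growthFactor_sub_one_mem hmn

lemma errorMajorant_succ_sub_mem (n : ℕ) :
    errorMajorant D δ (n + 1) - (errorMajorant D δ n
      + (D - C (coeff 2 D) * X ^ 2) * growthFactor D δ ^ n
      + C (coeff 2 D) * X ^ 2 * errorMajorant D δ n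
      + C δ * X ^ 4 * gaussianSeries (coeff 2 D) ^ (n + 1)) ∈ nonnegCoeffs ℝ := by
  set A := growthFactor D δ with hA
  set E := gaussianSeries (coeff 2 D) with hE
  set R := D - C (coeff 2 D) * X ^ 2 with hR
  have hd : 0 ≤ coeff 2 D := h.domination_mem 2
  have hδ : C δ * X ^ 4 ∈ nonnegCoeffs ℝ :=
    mul_mem (C_mem_nonnegCoeffs h.nonneg) (X_pow_mem_nonnegCoeffs 4)
  have hE1 : E - 1 ∈ nonnegCoeffs ℝ := by
    simpa only [sub_add_cancel] using add_mem (gaussianSeries_sub_one_mem hd)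
      (mul_mem (C_mem_nonnegCoeffs hd) (X_pow_mem_nonnegCoeffs 2))
  have hAn : A ^ n ∈ nonnegCoeffs ℝ := pow_mem h.growthFactor_mem n
  have hT := h.errorMajorant_mem n
  convert add_mem (add_mem (add_mem (mul_mem h.growthFactor_sub_gaussianSeries_mul_mem hAn)
    (mul_mem (mul_mem hE1 h.residual_mem) hAn)) (mul_mem (mul_mem hδ (gaussianSeries_mem hd)) hT))
    (mul_mem (gaussianSeries_sub_one_mem hd) hT) using 1
  simp only [errorMajorant, ← hA, ← hE, ← hR]
  ring

lemma coeff_kernel_of_lt_two {k : ℕ} (hk : k < 2) (l : ℕ) : coeff k (b l) = 0 := by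
  have hsum : |coeff k (b l)| ≤ ∑ i ∈ range (l + 1), |coeff k (b i)| :=
    single_le_sum (f := fun i ↦ |coeff k (b i)|) (fun _ _ ↦ abs_nonneg _) (self_mem_range_succ l)
  have hD : coeff k D = 0 := X_pow_dvd_iff.1 h.X_sq_dvd k hk
  exact abs_nonpos_iff.1 (hD ▸ hsum.trans (h.sum_abs_coeff_le k (l + 1)))

lemma X_sq_dvd_kernel (l : ℕ) : X ^ 2 ∣ b l :=
  X_pow_dvd_iff.2 fun _ hk ↦ h.coeff_kernel_of_lt_two hk l

lemma coeff_zero (n : ℕ) : coeff 0 (F n) = 1 := by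
  induction n with
  | zero => rw [h.zero, coeff_zero_one]
  | succ n ih =>
    rw [h.succ, map_add, map_sum, ih, sum_eq_zero, add_zero]
    exact fun l _ ↦ X_pow_dvd_iff.1 ((h.X_sq_dvd_kernel l).mul_right _) 0 two_pos

lemma coeff_two_succ_sub (n : ℕ) :
    coeff 2 (F (n + 1)) - coeff 2 (F n) = ∑ l ∈ range (n + 1), coeff 2 (b l) := by
  rw [h.succ, map_add, map_sum, add_sub_cancel_left]
  refine sum_congr rfl fun l _ ↦ ?_
  obtain ⟨c, hc⟩ := h.X_sq_dvd_kernel l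
  have h0 : coeff 2 (b l) = coeff 0 c := by rw [hc]; exact coeff_X_pow_mul c 2 0
  have hmul : coeff 2 (X ^ 2 * (c * F (n - l))) = coeff 0 (c * F (n - l)) :=
    coeff_X_pow_mul (c * F (n - l)) 2 0
  rw [h0, hc, mul_assoc, hmul, coeff_mul, Nat.antidiagonal_zero, sum_singleton,
    h.coeff_zero, mul_one]

lemma abs_coeff_two_sub_le (n l : ℕ) :
    |coeff 2 (F (n + l)) - coeff 2 (F n)| ≤ l * coeff 2 D := by
  induction l with
  | zero => simp
  | succ l ih =>
    have hstep : |coeff 2 (F (n + l + 1)) - coeff 2 (F (n + l))| ≤ coeff 2 D := by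
      rw [h.coeff_two_succ_sub]
      exact (abs_sum_le_sum_abs _ _).trans (h.sum_abs_coeff_le 2 _)
    refine (abs_sub_le _ (coeff 2 (F (n + l))) _).trans ((add_le_add hstep ih).trans_eq ?_)
    push_cast
    ring

lemma abs_coeff_two_sub_sub_le {m n l : ℕ} (hl : m = n + l) {i : ℕ} (hi : l ≤ i) :
    |coeff 2 (F m) - coeff 2 (F n)| ≤ i * coeff 2 D := by
  subst hl
  refine (h.abs_coeff_two_sub_le n l).trans ?_
  gcongr
  exact h.domination_mem 2

lemma abs_coeff_two_le {k n : ℕ} (hk : k ≤ n) : |coeff 2 (F k)| ≤ n * coeff 2 D := by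
  have hF0 : coeff 2 (F 0) = 0 := by rw [h.zero, coeff_one, if_neg two_ne_zero]
  simpa only [hF0, sub_zero] using h.abs_coeff_two_sub_sub_le (zero_add k).symm hk

lemma majorizedBy_gaussianSeries_increment (n : ℕ) :
    MajorizedBy (gaussianSeries (coeff 2 (F (n + 1))) - gaussianSeries (coeff 2 (F n)) -
        ∑ l ∈ range (n + 1),
          C (coeff 2 (b l)) * X ^ 2 * gaussianSeries (coeff 2 (F (n - l))))
      (C δ * X ^ 4 * gaussianSeries (coeff 2 D) ^ (n + 1)) := by
  rw [← gaussianSeries_nat_mul]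
  refine majorizedBy_gaussianSeries_sub (β := fun l ↦ coeff 2 (b l))
    (z := fun l ↦ coeff 2 (F (n - l))) (η := fun l : ℕ ↦ ((l : ℝ) + 1) * coeff 2 D)
    (h.coeff_two_succ_sub n) (h.abs_coeff_two_le le_rfl) (h.abs_coeff_two_le n.le_succ)
    (fun l _ ↦ h.abs_coeff_two_le (by lia)) (fun l hl ↦ ?_) (fun l hl ↦ ?_) (h.sum_lag_le _)
  all_goals
    have hln : l < n + 1 := mem_range.1 hl
    rw [← Nat.cast_succ]
  · exact h.abs_coeff_two_sub_sub_le (l := l + 1) (by lia) le_rfl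
  · exact h.abs_coeff_two_sub_sub_le (l := l) (by lia) l.le_succ

lemma sub_sum_absCoeffs_kernel_mem (N : ℕ) :
    D - ∑ l ∈ range N, absCoeffs (b l) ∈ nonnegCoeffs ℝ := fun k ↦ by
  simpa [absCoeffs] using h.sum_abs_coeff_le k N

lemma majorizedBy_growthFactor_pow (n : ℕ) : MajorizedBy (F n) (growthFactor D δ ^ n) := by
  induction n using Nat.strong_induction_on with
  | _ n ih =>
  match n with
  | 0 =>
    rw [h.zero, pow_zero]
    exact .refl_of_mem (one_mem _)
  | n + 1 =>
    set A := growthFactor D δ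
    have hconv : MajorizedBy (∑ l ∈ range (n + 1), b l * F (n - l))
        (∑ l ∈ range (n + 1), absCoeffs (b l) * A ^ n) :=
      .sum fun l _ ↦ (majorizedBy_absCoeffs _).mul <| (ih (n - l) (by lia)).mono <|
        pow_sub_pow_mem_of_le h.growthFactor_sub_one_mem (n.sub_le l)
    rw [h.succ]
    refine ((ih n n.lt_succ_self).add hconv).mono ?_
    have hδ := mul_mem (C_mem_nonnegCoeffs h.nonneg) (X_pow_mem_nonnegCoeffs 4)
    convert mul_mem (add_mem (add_mem h.growthFactor_sub_one_sub_mem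
      (h.sub_sum_absCoeffs_kernel_mem (n + 1))) hδ) (pow_mem h.growthFactor_mem n) using 1
    rw [← sum_mul]
    ring

lemma residual_sub_sum_absCoeffs_mem (N : ℕ) :
    D - C (coeff 2 D) * X ^ 2 -
      ∑ l ∈ range N, absCoeffs (b l - C (coeff 2 (b l)) * X ^ 2) ∈ nonnegCoeffs ℝ := fun k ↦ by
  simp only [absCoeffs, map_sub, map_sum, coeff_mk, coeff_C_mul, coeff_X_pow]
  split_ifs with hk
  · simp [hk]
  · simpa using h.sum_abs_coeff_le k N

lemma majorizedBy_errorMajorant (n : ℕ) :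
    MajorizedBy (F n - gaussianSeries (coeff 2 (F n))) (errorMajorant D δ n) := by
  induction n using Nat.strong_induction_on with
  | _ n ih =>
  match n with
  | 0 => simp [h.zero, coeff_one, gaussianSeries_zero, errorMajorant, MajorizedBy]
  | n + 1 =>
    set β := fun l ↦ coeff 2 (b l)
    set r := fun l ↦ b l - C (β l) * X ^ 2 with hr
    set e := fun n ↦ F n - gaussianSeries (coeff 2 (F n)) with he
    have hdecomp : F (n + 1) - gaussianSeries (coeff 2 (F (n + 1))) =
        e n + ∑ l ∈ range (n + 1), r l * F (n - l) +
        ∑ l ∈ range (n + 1), C (β l) * X ^ 2 * e (n - l) -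
        (gaussianSeries (coeff 2 (F (n + 1))) - gaussianSeries (coeff 2 (F n)) -
          ∑ l ∈ range (n + 1), C (β l) * X ^ 2 * gaussianSeries (coeff 2 (F (n - l)))) := by
      rw [h.succ]
      simp only [hr, he, sub_mul, mul_sub, sum_sub_distrib]
      ring
    have htail : MajorizedBy (∑ l ∈ range (n + 1), r l * F (n - l))
        (∑ l ∈ range (n + 1), absCoeffs (r l) * growthFactor D δ ^ n) :=
      .sum fun l _ ↦ (majorizedBy_absCoeffs _).mul <| (h.majorizedBy_growthFactor_pow _).mono <|
        pow_sub_pow_mem_of_le h.growthFactor_sub_one_mem (n.sub_le l)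
    have herror : MajorizedBy (∑ l ∈ range (n + 1), C (β l) * X ^ 2 * e (n - l))
        (∑ l ∈ range (n + 1), C |β l| * X ^ 2 * errorMajorant D δ n) :=
      .sum fun l _ ↦ (majorizedBy_C_mul_X_pow _ 2).mul <|
        (ih (n - l) (by lia)).mono (h.errorMajorant_sub_mem (n.sub_le l))
    rw [hdecomp]
    refine ((((ih n n.lt_succ_self).add htail).add herror).sub
      (h.majorizedBy_gaussianSeries_increment n)).mono ?_
    have hβd : C (coeff 2 D - ∑ l ∈ range (n + 1), |β l|) * X ^ 2 ∈ nonnegCoeffs ℝ :=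
      mul_mem (C_mem_nonnegCoeffs (sub_nonneg.2 (h.sum_abs_coeff_le 2 _)))
        (X_pow_mem_nonnegCoeffs 2)
    convert add_mem (add_mem (h.errorMajorant_succ_sub_mem n)
      (mul_mem (h.residual_sub_sum_absCoeffs_mem (n + 1)) (pow_mem h.growthFactor_mem n)))
      (mul_mem hβd (h.errorMajorant_mem n)) using 1
    simp only [← sum_mul, ← map_sum, map_sub]
    ring

end Comparison

end IsDominatedRenewal

end Renewal

section CoefficientExtraction

open PowerSeries
open scoped Nat

/-- The compositions of `M` into `u` parts, each at least two. -/
def compositionsTwoLE (u M : ℕ) : Finset (Fin u → Fin (M + 1)) :=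
  univ.filter fun k ↦ (∀ i, 2 ≤ (k i : ℕ)) ∧ ∑ i, (k i : ℕ) = M

lemma coeff_pow_eq_sum_fin {R : Type*} [CommSemiring R] (f : R⟦X⟧) (u M : ℕ) :
    coeff M (f ^ u) = ∑ k : Fin u → Fin (M + 1) with ∑ i, (k i : ℕ) = M,
      ∏ i, coeff (k i : ℕ) f := by
  rw [← Fin.prod_const u f, coeff_prod]
  symm
  refine sum_bij (fun k _ ↦ Finsupp.equivFunOnFinite.symm fun i ↦ (k i : ℕ)) ?_ ?_ ?_ fun _ _ ↦ rfl
  · intro k hk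
    rw [mem_finsuppAntidiag]
    exact ⟨by simpa using hk, subset_univ _⟩
  · intro k _ k' _ hkk'
    ext i
    exact congrFun (Finsupp.equivFunOnFinite.symm.injective hkk') i
  · intro l hl
    have hsum : ∑ i, l i = M := (mem_finsuppAntidiag.1 hl).1
    have hlt (i : Fin u) : l i < M + 1 :=
      Nat.lt_succ_of_le (hsum ▸ single_le_sum (fun _ _ ↦ Nat.zero_le _) (mem_univ i))
    exact ⟨fun i ↦ ⟨l i, hlt i⟩, by simpa using hsum, by ext; rfl⟩

lemma coeff_pow_eq_sum_compositionsTwoLE {R : Type*} [CommSemiring R] {f : R⟦X⟧}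
    (hf : X ^ 2 ∣ f) (u M : ℕ) :
    coeff M (f ^ u) = ∑ k ∈ compositionsTwoLE u M, ∏ i, coeff (k i : ℕ) f := by
  rw [coeff_pow_eq_sum_fin, compositionsTwoLE, ← filter_filter, filter_comm]
  refine (sum_subset (filter_subset _ _) fun k hk hk' ↦ ?_).symm
  obtain ⟨i, hi⟩ : ∃ i, (k i : ℕ) < 2 := by
    by_contra! hcon
    exact hk' (mem_filter.2 ⟨hk, hcon⟩)
  exact prod_eq_zero (mem_univ i) (X_pow_dvd_iff.1 hf _ hi)

lemma coeff_pow_eq_zero_of_X_pow_dvd {R : Type*} [CommSemiring R] {f : R⟦X⟧} {d u m : ℕ}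
    (hf : X ^ d ∣ f) (hm : m < d * u) : coeff m (f ^ u) = 0 :=
  X_pow_dvd_iff.1 (pow_mul (X : R⟦X⟧) d u ▸ pow_dvd_pow_of_dvd hf u) m hm

lemma coeff_mul_pow_of_X_pow_dvd {R : Type*} [CommSemiring R] {f : R⟦X⟧} {d : ℕ}
    (hf : X ^ d ∣ f) (u : ℕ) : coeff (d * u) (f ^ u) = coeff d f ^ u := by
  obtain ⟨c, rfl⟩ := hf
  have hcoeff (k : ℕ) (e : R⟦X⟧) : coeff k (X ^ k * e) = constantCoeff e := by
    simpa using coeff_X_pow_mul e k 0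
  rw [mul_pow, ← pow_mul, hcoeff, hcoeff, map_pow]

lemma coeff_two_mul_exp_subst_nsmul {K : Type*} [Field K] [CharZero K] {f : K⟦X⟧}
    (hf : X ^ 2 ∣ f) {q : ℕ} (hq : 1 ≤ q) (n : ℕ) :
    coeff (2 * q) ((exp K).subst (n • f)) = (n * coeff 2 f) ^ q / q ! +
      ∑ u ∈ Icc 1 (q - 1), (n : K) ^ u / u ! * coeff (2 * q) (f ^ u) := by
  have hf0 : constantCoeff (n • f) = 0 := by
    rw [map_nsmul, ← coeff_zero_eq_constantCoeff_apply, X_pow_dvd_iff.1 hf 0 two_pos, smul_zero]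
  have hterm (u : ℕ) : coeff (2 * q) ((n • f) ^ u) / (u ! : K) =
      (n : K) ^ u / u ! * coeff (2 * q) (f ^ u) := by
    rw [smul_pow, ← Nat.cast_smul_eq_nsmul K, map_smul, smul_eq_mul, Nat.cast_pow]
    ring
  have hvanish : ∀ u ∈ range (2 * q + 1), u ∉ insert q (Icc 1 (q - 1)) →
      (n : K) ^ u / u ! * coeff (2 * q) (f ^ u) = 0 := by
    intro u _ hu
    rw [mem_insert, mem_Icc] at hu
    obtain rfl | hqu : u = 0 ∨ q < u := by lia
    · rw [pow_zero f, coeff_one, if_neg (by lia), mul_zero]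
    · rw [coeff_pow_eq_zero_of_X_pow_dvd hf (by lia), mul_zero]
  rw [coeff_exp_subst hf0 (2 * q).lt_succ_self, sum_congr rfl fun u _ ↦ hterm u,
    ← sum_subset (fun u hu ↦ ?_) hvanish, sum_insert (by simp; lia),
    coeff_mul_pow_of_X_pow_dvd hf, mul_pow, div_mul_eq_mul_div]
  rw [mem_insert, mem_Icc] at hu
  rw [mem_range]
  lia

theorem IsDominatedRenewal.coeff_two_mul_le {F b : ℕ → ℝ⟦X⟧} {D : ℝ⟦X⟧} {δ : ℝ}
    (h : IsDominatedRenewal F b D δ) {w : ℕ → ℝ}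
    (hw : ∀ k, 2 ≤ k → coeff k D + (if k = 4 then δ else 0) ≤ w k) {q : ℕ} (hq : 1 ≤ q) (n : ℕ) :
    coeff (2 * q) (F n) ≤ coeff 2 (F n) ^ q / q ! +
      ∑ u ∈ Icc 1 (q - 1), (n : ℝ) ^ u / u ! * ∑ k ∈ compositionsTwoLE u (2 * q), ∏ i, w (k i) := by
  have hcoeff (k : ℕ) : coeff k (D + C δ * X ^ 4) = coeff k D + if k = 4 then δ else 0 := by
    rw [map_add, coeff_C_mul, coeff_X_pow, mul_ite, mul_one, mul_zero]
  have hpow (u : ℕ) : coeff (2 * q) ((D + C δ * X ^ 4) ^ u) ≤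
      ∑ k ∈ compositionsTwoLE u (2 * q), ∏ i, w (k i) := by
    rw [coeff_pow_eq_sum_compositionsTwoLE h.X_sq_dvd_exponent]
    refine sum_le_sum fun k hk ↦ prod_le_prod (fun i _ ↦ h.exponent_mem _) fun i _ ↦ ?_
    rw [hcoeff]
    exact hw _ ((mem_filter.1 hk).2.1 i)
  have hmajor : coeff (2 * q) (F n) - coeff 2 (F n) ^ q / q ! ≤
      coeff (2 * q) (errorMajorant D δ n) := by
    simpa only [map_sub, coeff_two_mul_gaussianSeries] using
      (le_abs_self _).trans (h.majorizedBy_errorMajorant n (2 * q))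
  rw [errorMajorant, map_sub, ← gaussianSeries_nat_mul, coeff_two_mul_gaussianSeries,
    growthFactor, ← exp_subst_nsmul h.constantCoeff_exponent,
    coeff_two_mul_exp_subst_nsmul h.X_sq_dvd_exponent hq, hcoeff 2, if_neg (by norm_num),
    add_zero, add_sub_cancel_left] at hmajor
  refine (sub_le_iff_le_add'.1 hmajor).trans (add_le_add_right (sum_le_sum fun u _ ↦ ?_) _)
  exact mul_le_mul_of_nonneg_left (hpow u) (by positivity)

end CoefficientExtraction

section LogarithmicGrowth

variable {γ β v : ℝ}

lemma log_le_div_exp_one {y : ℝ} (hy : 0 < y) : Real.log y ≤ y / Real.exp 1 := by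
  have h := Real.log_le_sub_one_of_pos (div_pos hy (Real.exp_pos 1))
  rw [Real.log_div hy.ne' (Real.exp_ne_zero 1), Real.log_exp] at h
  linarith

lemma log_rpow_le (hγ : 0 ≤ γ) (hβ : 0 < β) (hv : 1 ≤ v) :
    Real.log v ^ γ ≤ (γ / (Real.exp 1 * β)) ^ γ * v ^ β := by
  have hv0 : 0 < v := zero_lt_one.trans_le hv
  rcases hγ.eq_or_lt with rfl | hγ
  · simpa using Real.one_le_rpow hv hβ.le
  have hlog : Real.log v ≤ γ / (Real.exp 1 * β) * v ^ (β / γ) := calc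
    Real.log v = γ / β * Real.log (v ^ (β / γ)) := by
      rw [Real.log_rpow hv0]; field_simp
    _ ≤ γ / β * (v ^ (β / γ) / Real.exp 1) := by
      gcongr; exact log_le_div_exp_one (by positivity)
    _ = γ / (Real.exp 1 * β) * v ^ (β / γ) := by field_simp
  calc Real.log v ^ γ ≤ (γ / (Real.exp 1 * β) * v ^ (β / γ)) ^ γ :=
        Real.rpow_le_rpow (Real.log_nonneg hv) hlog hγ.le
    _ = (γ / (Real.exp 1 * β)) ^ γ * v ^ β := by
        rw [Real.mul_rpow (by positivity) (by positivity), ← Real.rpow_mul hv0.le,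
          div_mul_cancel₀ _ hγ.ne']

lemma one_le_log_rpow (hγ : 0 ≤ γ) (hv : Real.exp 1 ≤ v) : 1 ≤ Real.log v ^ γ :=
  Real.one_le_rpow ((Real.le_log_iff_exp_le ((Real.exp_pos 1).trans_le hv)).2 hv) hγ

/-- The best constant `a` in `(log v) ^ γ ≤ a * v ^ (1 / (2 * k))`. -/
def logGrowth (γ : ℝ) (k : ℕ) : ℝ := (2 * γ * (k / Real.exp 1)) ^ γ

lemma logGrowth_nonneg (hγ : 0 ≤ γ) (k : ℕ) : 0 ≤ logGrowth γ k := by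
  unfold logGrowth; positivity

lemma log_rpow_le_logGrowth_mul (hγ : 0 ≤ γ) (hv : 1 ≤ v) {k : ℕ} (hk : 1 ≤ k) :
    Real.log v ^ γ ≤ logGrowth γ k * v ^ (1 / (2 * (k : ℝ))) := by
  have h := log_rpow_le hγ (show 0 < 1 / (2 * (k : ℝ)) by positivity) hv
  rwa [show γ / (Real.exp 1 * (1 / (2 * k))) = 2 * γ * (k / Real.exp 1) by field_simp] at h

lemma div_exp_one_pow_le_factorial (k : ℕ) : ((k : ℝ) / Real.exp 1) ^ k ≤ k.factorial := by
  have h := Real.pow_div_factorial_le_exp (k : ℝ) k.cast_nonneg k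
  rw [div_le_iff₀ (by positivity)] at h
  rwa [div_pow, ← Real.exp_nat_mul, mul_one, div_le_iff₀' (Real.exp_pos _)]

lemma logGrowth_pow_le (hγ : 0 ≤ γ) (k : ℕ) :
    logGrowth γ k ^ k ≤ ((2 * γ) ^ γ) ^ k * (k.factorial : ℝ) ^ γ := by
  rw [logGrowth, Real.mul_rpow (by positivity) (by positivity), mul_pow,
    Real.rpow_pow_comm (x := k / Real.exp 1) (by positivity)]
  gcongr
  exact div_exp_one_pow_le_factorial k

lemma logGrowth_two_le (hγ : 0 ≤ γ) : logGrowth γ 2 ≤ (2 * γ) ^ γ := by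
  have he : (2 : ℕ) / Real.exp 1 ≤ 1 := by
    rw [div_le_one (Real.exp_pos 1)]
    exact_mod_cast (one_add_one_eq_two (R := ℝ)).symm.le.trans (Real.add_one_le_exp 1)
  refine Real.rpow_le_rpow (by positivity) ?_ hγ
  exact mul_le_of_le_one_right (by positivity) he

end LogarithmicGrowth

section Constants

variable {N A γ C ρ : ℝ}

lemma log_one_div_pos (h0 : 0 < ρ) (h1 : ρ < 1) : 0 < Real.log (1 / ρ) :=
  Real.log_pos ((one_lt_div h0).2 h1)

lemma one_div_one_sub_rpow_le (h0 : 0 < ρ) (h1 : ρ < 1) {β : ℝ} (hβ : 0 < β) :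
    1 / (1 - ρ ^ β) ≤ ρ ^ (-β) * (1 / β * (Real.log (1 / ρ))⁻¹) := by
  have hL := log_one_div_pos h0 h1
  have hlog : β * Real.log (1 / ρ) ≤ ρ ^ (-β) - 1 := by
    have h := Real.log_le_sub_one_of_pos (show 0 < ρ ^ (-β) by positivity)
    rwa [Real.log_rpow h0, neg_mul_comm, ← Real.log_inv, ← one_div] at h
  have hfactor : ρ ^ (-β) * (1 - ρ ^ β) = ρ ^ (-β) - 1 := by
    rw [mul_sub, ← Real.rpow_add h0]; simp
  rw [div_le_iff₀ (sub_pos.2 (Real.rpow_lt_one h0.le h1 hβ))]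
  calc 1 ≤ (ρ ^ (-β) - 1) / (β * Real.log (1 / ρ)) := (one_le_div (by positivity)).2 hlog
    _ = ρ ^ (-β) * (1 / β * (Real.log (1 / ρ))⁻¹) * (1 - ρ ^ β) := by
      rw [← hfactor]; field_simp

lemma one_add_one_div_pow_le_three {k : ℕ} (hk : 0 < k) (j : ℕ) (hj : j ≤ k) :
    (1 + 1 / (k : ℝ)) ^ j ≤ 3 := by
  calc (1 + 1 / (k : ℝ)) ^ j ≤ (1 + 1 / (k : ℝ)) ^ k :=
        pow_le_pow_right₀ (by simp) hj
    _ ≤ Real.exp (1 / k) ^ k := by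
        gcongr
        exact (add_comm _ _).trans_le (Real.add_one_le_exp _)
    _ = Real.exp 1 := by rw [← Real.exp_nat_mul]; congr 1; field_simp
    _ ≤ 3 := Real.exp_one_lt_three.le

lemma two_mul_pow_pred_le (k : ℕ) (hk : 2 ≤ k) :
    (2 * (k : ℝ)) ^ (k - 1) ≤ 2 * (k.factorial : ℝ) ^ 2 := by
  obtain h5 | h5 := le_total k 5
  · interval_cases k <;> norm_num [Nat.factorial]
  clear hk
  induction k, h5 using Nat.le_induction with
  | base => norm_num [Nat.factorial]
  | succ k hk ih =>
    have hk5 : (5 : ℝ) ≤ k := by exact_mod_cast hk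
    have hsplit : (2 * ((k + 1 : ℕ) : ℝ)) ^ (k + 1 - 1)
        = 2 * (k + 1) * ((2 * (k : ℝ)) ^ (k - 1) * (1 + 1 / (k : ℝ)) ^ (k - 1)) := by
      rw [← mul_pow, show 2 * (k : ℝ) * (1 + 1 / k) = 2 * (k + 1) by field_simp, ← pow_succ',
        show k - 1 + 1 = k + 1 - 1 by omega]
      push_cast; rfl
    have h3 := one_add_one_div_pow_le_three (by omega : 0 < k) (k - 1) (by omega)
    rw [hsplit, Nat.factorial_succ]
    push_cast
    calc 2 * ((k : ℝ) + 1) * ((2 * (k : ℝ)) ^ (k - 1) * (1 + 1 / (k : ℝ)) ^ (k - 1))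
        ≤ 2 * ((k : ℝ) + 1) * ((2 * (k.factorial : ℝ) ^ 2) * 3) := by gcongr
      _ = 2 * ((k : ℝ) + 1) * 6 * (k.factorial : ℝ) ^ 2 := by ring
      _ ≤ 2 * ((k : ℝ) + 1) * (k + 1) * (k.factorial : ℝ) ^ 2 := by gcongr; linarith
      _ = 2 * (((k : ℝ) + 1) * k.factorial) ^ 2 := by ring

/-- The bound on `∑ l, |coeff k (b l)|` for the renewal coefficients `b l` of a chain with
ergodicity constants `C` and `ρ`, when the observable is at most `h k * V ^ (1 / (2 * k))`. -/
def cumulantBound (h : ℕ → ℝ) (C ρ : ℝ) (k : ℕ) : ℝ :=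
  h k ^ k * (C / (1 - ρ ^ (1 / (2 * (k : ℝ))))) ^ (k - 1) * (C / 2)

/-- The bound on `∑ l, |coeff 2 (b l)| * (l + 1) * cumulantBound h C ρ 2`. -/
def lagBound (h : ℕ → ℝ) (C ρ : ℝ) : ℝ :=
  (h 2 ^ 2 * (C ^ 2 / 2)) ^ 2 * (1 / (1 - ρ ^ ((1 : ℝ) / 6))) ^ 3

/-- The weight `A ^ k (k!) ^ γ / (ρ ^ (1/2) (log (1/ρ)) ^ (k - 1))` that a part of size `k` of
`2 * q` contributes to the error term, up to a factor `(k!) ^ 2`. -/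
def partWeight (A γ ρ : ℝ) (k : ℕ) : ℝ :=
  A ^ k * (k.factorial : ℝ) ^ γ * ((ρ ^ ((1 : ℝ) / 2))⁻¹ * (Real.log (1 / ρ))⁻¹ ^ (k - 1))

lemma partWeight_nonneg (hA : 0 ≤ A) (h0 : 0 < ρ) (h1 : ρ < 1) (k : ℕ) :
    0 ≤ partWeight A γ ρ k := by
  have hL := log_one_div_pos h0 h1
  unfold partWeight; positivity

lemma cumulantBound_le (hN : 0 ≤ N) (hγ : 0 ≤ γ) (hC : 0 ≤ C) (h0 : 0 < ρ) (h1 : ρ < 1)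
    {k : ℕ} (hk : 1 ≤ k) :
    cumulantBound (fun k ↦ N * logGrowth γ k) C ρ k ≤
      (2 * (k : ℝ)) ^ (k - 1) / 2 * partWeight (C * (2 * γ) ^ γ * N) γ ρ k := by
  have hL := log_one_div_pos h0 h1
  have hβ : 0 < 1 / (2 * (k : ℝ)) := by positivity
  have hgeo := one_div_one_sub_rpow_le h0 h1 hβ
  have hpos : 0 < 1 - ρ ^ (1 / (2 * (k : ℝ))) := sub_pos.2 (Real.rpow_lt_one h0.le h1 hβ)
  rw [one_div_one_div] at hgeo
  have hρ : (ρ ^ (-(1 / (2 * (k : ℝ))))) ^ (k - 1) ≤ (ρ ^ ((1 : ℝ) / 2))⁻¹ := by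
    rw [← Real.rpow_natCast, ← Real.rpow_mul h0.le, ← Real.rpow_neg h0.le]
    refine Real.rpow_le_rpow_of_exponent_ge h0 h1.le ?_
    rw [Nat.cast_pred hk, neg_mul, neg_le_neg_iff, div_mul_eq_mul_div, one_mul,
      div_le_div_iff₀ (by positivity) two_pos]
    linarith
  calc cumulantBound (fun k ↦ N * logGrowth γ k) C ρ k
      = (N ^ k * logGrowth γ k ^ k) * (C * (1 / (1 - ρ ^ (1 / (2 * (k : ℝ)))))) ^ (k - 1)
          * (C / 2) := by rw [cumulantBound, mul_pow, mul_one_div]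
    _ ≤ (N ^ k * (((2 * γ) ^ γ) ^ k * (k.factorial : ℝ) ^ γ)) *
          (C * (ρ ^ (-(1 / (2 * (k : ℝ)))) * (2 * (k : ℝ) * (Real.log (1 / ρ))⁻¹))) ^ (k - 1)
          * (C / 2) := by
        gcongr
        exact logGrowth_pow_le hγ k
    _ = (2 * (k : ℝ)) ^ (k - 1) / 2 * ((C * (2 * γ) ^ γ * N) ^ k * (k.factorial : ℝ) ^ γ *
          ((ρ ^ (-(1 / (2 * (k : ℝ))))) ^ (k - 1) * (Real.log (1 / ρ))⁻¹ ^ (k - 1))) := by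
        obtain ⟨m, rfl⟩ := Nat.exists_eq_add_of_le' hk
        simp only [Nat.add_sub_cancel, mul_pow, pow_succ C]
        ring
    _ ≤ (2 * (k : ℝ)) ^ (k - 1) / 2 * partWeight (C * (2 * γ) ^ γ * N) γ ρ k := by
        unfold partWeight; gcongr

lemma lagBound_le (hN : 0 ≤ N) (hγ : 0 ≤ γ) (h0 : 0 < ρ) (h1 : ρ < 1) :
    lagBound (fun k ↦ N * logGrowth γ k) C ρ ≤
      54 * partWeight (C * (2 * γ) ^ γ * N) γ ρ 4 := by
  have hL := log_one_div_pos h0 h1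
  have hg := logGrowth_nonneg hγ 2
  have hgeo := one_div_one_sub_rpow_le h0 h1 (show (0 : ℝ) < 1 / 6 by norm_num)
  have hpos : 0 < 1 - ρ ^ ((1 : ℝ) / 6) := sub_pos.2 (Real.rpow_lt_one h0.le h1 (by norm_num))
  have hρ : (ρ ^ (-((1 : ℝ) / 6))) ^ 3 = (ρ ^ ((1 : ℝ) / 2))⁻¹ := by
    rw [← Real.rpow_neg h0.le, ← Real.rpow_natCast, ← Real.rpow_mul h0.le]
    norm_num
  have hfac : (1 : ℝ) ≤ ((4 : ℕ).factorial : ℝ) ^ γ :=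
    Real.one_le_rpow (by norm_num [Nat.factorial]) hγ
  calc lagBound (fun k ↦ N * logGrowth γ k) C ρ
      ≤ ((N * (2 * γ) ^ γ) ^ 2 * (C ^ 2 / 2)) ^ 2 *
          (ρ ^ (-((1 : ℝ) / 6)) * (1 / (1 / 6) * (Real.log (1 / ρ))⁻¹)) ^ 3 := by
        unfold lagBound
        beta_reduce
        gcongr
        exact logGrowth_two_le hγ
    _ = 54 * ((C * (2 * γ) ^ γ * N) ^ 4 * 1 *
          ((ρ ^ (-((1 : ℝ) / 6))) ^ 3 * (Real.log (1 / ρ))⁻¹ ^ 3)) := by ring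
    _ ≤ 54 * partWeight (C * (2 * γ) ^ γ * N) γ ρ 4 := by
        rw [hρ, partWeight]
        gcongr

lemma cumulantBound_add_lagBound_le (hN : 0 ≤ N) (hγ : 0 ≤ γ) (hC : 0 ≤ C) (h0 : 0 < ρ)
    (h1 : ρ < 1) {k : ℕ} (hk : 2 ≤ k) :
    cumulantBound (fun k ↦ N * logGrowth γ k) C ρ k +
        (if k = 4 then lagBound (fun k ↦ N * logGrowth γ k) C ρ else 0) ≤
      (k.factorial : ℝ) ^ 2 * partWeight (C * (2 * γ) ^ γ * N) γ ρ k := by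
  have hcum := cumulantBound_le hN hγ hC h0 h1 (one_le_two.trans hk)
  have hw := partWeight_nonneg (γ := γ) (show 0 ≤ C * (2 * γ) ^ γ * N by positivity) h0 h1 k
  split_ifs with h4
  · subst h4
    refine (add_le_add hcum (lagBound_le hN hγ h0 h1)).trans ?_
    rw [← add_mul]
    exact mul_le_mul_of_nonneg_right (by norm_num [Nat.factorial]) hw
  · rw [add_zero]
    refine hcum.trans (mul_le_mul_of_nonneg_right ?_ hw)
    linarith [two_mul_pow_pred_le k hk]

lemma prod_factorial_sq_mul_partWeight (hγ : 0 ≤ γ) (h0 : 0 < ρ) {u q : ℕ}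
    {k : Fin u → Fin (2 * q + 1)} (hk : k ∈ compositionsTwoLE u (2 * q)) :
    ∏ i, (((k i : ℕ).factorial : ℝ) ^ 2 * partWeight (C * (2 * γ) ^ γ * N) γ ρ (k i)) =
      C ^ (2 * q) * (2 * γ) ^ (2 * γ * q) * N ^ (2 * q) *
        (∏ i, ((k i : ℕ).factorial : ℝ) ^ (γ + 2)) /
        (ρ ^ ((u : ℝ) / 2) * Real.log (1 / ρ) ^ (2 * q - u)) := by
  obtain ⟨-, h2, hs⟩ := mem_filter.1 hk
  have hsum : ∑ i, ((k i : ℕ) - 1) = 2 * q - u := by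
    rw [sum_tsub_distrib _ fun i _ ↦ one_le_two.trans (h2 i), hs]; simp
  have hγq : ((2 * γ) ^ γ) ^ (2 * q) = (2 * γ) ^ (2 * γ * q) := by
    rw [← Real.rpow_mul_natCast (by positivity)]; congr 1; push_cast; ring
  have hρu : (ρ ^ ((1 : ℝ) / 2)) ^ u = ρ ^ ((u : ℝ) / 2) := by
    rw [← Real.rpow_mul_natCast h0.le]; congr 1; ring
  have hfac (i) : ((k i : ℕ).factorial : ℝ) ^ (γ + 2) =
      ((k i : ℕ).factorial : ℝ) ^ γ * ((k i : ℕ).factorial : ℝ) ^ 2 := by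
    rw [Real.rpow_add (by positivity), Real.rpow_two]
  simp only [partWeight, hfac, prod_mul_distrib, prod_pow_eq_pow_sum, hs, hsum, prod_const,
    card_univ, Fintype.card_fin]
  rw [mul_pow, mul_pow, hγq, inv_pow, inv_pow, hρu]
  ring

lemma factorial_mul_sum_prod_partWeight (hγ : 0 ≤ γ) (h0 : 0 < ρ) (u q n : ℕ) :
    ((2 * q).factorial : ℝ) * ((n : ℝ) ^ u / u.factorial * ∑ k ∈ compositionsTwoLE u (2 * q),
        ∏ i, (((k i : ℕ).factorial : ℝ) ^ 2 * partWeight (C * (2 * γ) ^ γ * N) γ ρ (k i))) =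
      C ^ (2 * q) * (2 * γ) ^ (2 * γ * q) * N ^ (2 * q) *
        (Bcoef γ u q * (n : ℝ) ^ u / (ρ ^ ((u : ℝ) / 2) * Real.log (1 / ρ) ^ (2 * q - u))) := by
  rw [sum_congr rfl fun k hk ↦ prod_factorial_sq_mul_partWeight hγ h0 hk, ← sum_div, ← mul_sum,
    Bcoef, compositionsTwoLE]
  ring

end Constants

section Interpolation

variable {X : Type*} [MeasurableSpace X] {μ ν π : Measure X} {V f : X → ℝ} {a m t α : ℝ}

lemma rpow_le_mul_tangent {v : ℝ} (ha : 0 < a) (hv : 0 ≤ v) (h0 : 0 ≤ α) (h1 : α ≤ 1) :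
    v ^ α ≤ a ^ α * (α * (v / a) + (1 - α)) := by
  have h := Real.geom_mean_le_arith_mean2_weighted h0 (sub_nonneg.2 h1)
    (div_nonneg hv ha.le) zero_le_one (by ring)
  rwa [Real.one_rpow, mul_one, mul_one, Real.div_rpow hv ha.le,
    div_le_iff₀' (by positivity)] at h

lemma integral_abs_le_of_abs_le_rpow [IsFiniteMeasure μ] (hV : ∀ x, 0 ≤ V x)
    (hVint : Integrable V μ) (h0 : 0 ≤ α) (h1 : α ≤ 1) (ht : 0 ≤ t) (ha : 0 < a)
    (hmass : μ.real Set.univ ≤ m) (hVle : ∫ x, V x ∂μ ≤ m * a)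
    (hf : ∀ᵐ x ∂μ, |f x| ≤ t * V x ^ α) : ∫ x, |f x| ∂μ ≤ t * (m * a ^ α) := by
  have hint : Integrable (fun x ↦ α * (V x / a)) μ := (hVint.div_const a).const_mul α
  calc ∫ x, |f x| ∂μ ≤ ∫ x, t * (a ^ α * (α * (V x / a) + (1 - α))) ∂μ := by
        refine integral_mono_of_nonneg (ae_of_all _ fun x ↦ abs_nonneg _)
          (((hint.add (integrable_const _)).const_mul _).const_mul _) ?_
        filter_upwards [hf] with x hx
        exact hx.trans (mul_le_mul_of_nonneg_left (rpow_le_mul_tangent ha (hV x) h0 h1) ht)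
    _ = t * (a ^ α * (α * ((∫ x, V x ∂μ) / a) + (1 - α) * μ.real Set.univ)) := by
        rw [integral_const_mul, integral_const_mul, integral_add hint (integrable_const _),
          integral_const_mul, integral_div, integral_const, smul_eq_mul, mul_comm (μ.real _)]
    _ ≤ t * (a ^ α * (α * m + (1 - α) * m)) := by
        gcongr
        rwa [div_le_iff₀ ha]
    _ = t * (m * a ^ α) := by ring

lemma integral_sub_integral [IsFiniteMeasure ν] [IsFiniteMeasure π] (hν : Integrable f ν)
    (hπ : Integrable f π) :
    ∫ x, f x ∂ν - ∫ x, f x ∂π = ∫ x, f x ∂(ν - π) - ∫ x, f x ∂(π - ν) := by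
  have h := Measure.sub_toSignedMeasure_eq_toSignedMeasure_sub (μ := ν) (ν := π)
  rw [sub_eq_sub_iff_add_eq_add, ← Measure.toSignedMeasure_add, ← Measure.toSignedMeasure_add,
    Measure.toSignedMeasure_eq_toSignedMeasure_iff] at h
  rw [sub_eq_sub_iff_add_eq_add, ← integral_add_measure hν (hπ.mono_measure Measure.sub_le),
    ← integral_add_measure (hν.mono_measure Measure.sub_le) hπ, h]

lemma abs_integral_sub_integral_le_integral_abs [IsFiniteMeasure ν] [IsFiniteMeasure π]
    (hν : Integrable f ν) (hπ : Integrable f π) :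
    |∫ x, f x ∂ν - ∫ x, f x ∂π| ≤ ∫ x, |f x| ∂(ν - π + (π - ν)) := by
  rw [integral_sub_integral hν hπ, integral_add_measure (hν.mono_measure Measure.sub_le).abs
    (hπ.mono_measure Measure.sub_le).abs]
  exact (abs_sub _ _).trans (add_le_add abs_integral_le_integral_abs abs_integral_le_integral_abs)

lemma wTV_eq_integral (hν : Integrable V ν) (hπ : Integrable V π) :
    wTV V ν π = ∫ x, V x ∂(ν - π + (π - ν)) :=
  (integral_add_measure (hν.mono_measure Measure.sub_le) (hπ.mono_measure Measure.sub_le)).symm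

lemma real_univ_sub_add_sub_le_two [IsProbabilityMeasure ν] [IsProbabilityMeasure π] :
    (ν - π + (π - ν)).real Set.univ ≤ 2 := by
  have hνπ : (ν - π).real Set.univ ≤ ν.real Set.univ :=
    ENNReal.toReal_mono (by simp) (Measure.sub_le _)
  have hπν : (π - ν).real Set.univ ≤ π.real Set.univ :=
    ENNReal.toReal_mono (by simp) (Measure.sub_le _)
  rw [measureReal_add_apply]
  simp only [probReal_univ] at hνπ hπν
  linarith

lemma abs_integral_sub_integral_le_of_wTV_le [IsProbabilityMeasure ν] [IsProbabilityMeasure π]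
    (hV : ∀ x, 0 ≤ V x) (hVν : Integrable V ν) (hVπ : Integrable V π) (hfν : Integrable f ν)
    (hfπ : Integrable f π) (h0 : 0 ≤ α) (h1 : α ≤ 1) (ht : 0 ≤ t) (ha : 0 < a)
    (hν : ∀ᵐ x ∂ν, |f x| ≤ t * V x ^ α) (hπ : ∀ᵐ x ∂π, |f x| ≤ t * V x ^ α)
    (hwTV : wTV V ν π ≤ 2 * a) :
    |∫ x, f x ∂ν - ∫ x, f x ∂π| ≤ t * (2 * a ^ α) := by
  rw [wTV_eq_integral hVν hVπ] at hwTV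
  refine (abs_integral_sub_integral_le_integral_abs hfν hfπ).trans ?_
  refine integral_abs_le_of_abs_le_rpow hV ?_ h0 h1 ht ha real_univ_sub_add_sub_le_two hwTV ?_
  · exact (hVν.mono_measure Measure.sub_le).add_measure (hVπ.mono_measure Measure.sub_le)
  · exact ae_add_measure_iff.2 ⟨ae_mono Measure.sub_le hν, ae_mono Measure.sub_le hπ⟩

end Interpolation

section Moments

variable {X Ω : Type*} [MeasurableSpace X] [MeasurableSpace Ω] {μ : Measure X} {P : Measure Ω}
  {f g : X → ℝ}

/-- All moments of `f` under `μ` are finite. -/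
def HasAllMoments (f : X → ℝ) (μ : Measure X) : Prop := ∀ k : ℕ, MemLp f k μ

lemma HasAllMoments.integrable (hf : HasAllMoments f μ) : Integrable f μ :=
  memLp_one_iff_integrable.1 (by exact_mod_cast hf 1)

lemma hasAllMoments_of_integrable_pow (hf : AEStronglyMeasurable f μ)
    (h : ∀ k : ℕ, Integrable (fun x ↦ |f x| ^ k) μ) : HasAllMoments f μ := by
  intro k
  rcases k.eq_zero_or_pos with rfl | hk
  · simpa using hf
  · refine (integrable_norm_rpow_iff hf (by exact_mod_cast hk.ne') (by simp)).1 ?_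
    simpa using h k

lemma hasAllMoments_const [IsFiniteMeasure μ] (a : ℝ) : HasAllMoments (fun _ ↦ a) μ :=
  fun _ ↦ memLp_const a

lemma HasAllMoments.add (hf : HasAllMoments f μ) (hg : HasAllMoments g μ) :
    HasAllMoments (fun x ↦ f x + g x) μ := fun k ↦ (hf k).add (hg k)

lemma HasAllMoments.const_mul (hf : HasAllMoments f μ) (a : ℝ) :
    HasAllMoments (fun x ↦ a * f x) μ := fun k ↦ (hf k).const_mul a

lemma HasAllMoments.mul (hf : HasAllMoments f μ) (hg : HasAllMoments g μ) :
    HasAllMoments (fun x ↦ f x * g x) μ := by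
  intro k
  have : ENNReal.HolderTriple ((2 * k : ℕ) : ℝ≥0∞) ((2 * k : ℕ) : ℝ≥0∞) k := by
    constructor
    push_cast
    rw [ENNReal.mul_inv (by simp) (by simp), ← add_mul, ENNReal.inv_two_add_inv_two, one_mul]
  exact (hg (2 * k)).mul' (hf (2 * k))

lemma HasAllMoments.sum {ι : Type*} {s : Finset ι} {F : ι → X → ℝ}
    (hF : ∀ i ∈ s, HasAllMoments (F i) μ) : HasAllMoments (fun x ↦ ∑ i ∈ s, F i x) μ :=
  fun k ↦ memLp_finsetSum s fun i hi ↦ hF i hi k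

lemma HasAllMoments.pow [IsFiniteMeasure μ] (hf : HasAllMoments f μ) (n : ℕ) :
    HasAllMoments (fun x ↦ f x ^ n) μ := by
  induction n with
  | zero => simpa using hasAllMoments_const 1
  | succ n ih => simpa only [pow_succ] using ih.mul hf

lemma HasAllMoments.comp {T : Ω → X} (hf : HasAllMoments f μ) (hT : MeasurePreserving T P μ) :
    HasAllMoments (fun ω ↦ f (T ω)) P := fun k ↦ (hf k).comp_measurePreserving hT

end Moments

section InvariantKernels

variable {X : Type*} [MeasurableSpace X] {κ η : Kernel X X} {π : Measure X} {f g : X → ℝ}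

/-- The operator `f ↦ κ f - π f`. -/
def centeredOp (κ : Kernel X X) (π : Measure X) (f : X → ℝ) (x : X) : ℝ :=
  ∫ y, f y ∂κ x - ∫ y, f y ∂π

lemma ae_ae_of_invariant (hκ : κ.Invariant π) {p : X → Prop} (hp : ∀ᵐ x ∂π, p x) :
    ∀ᵐ x ∂π, ∀ᵐ y ∂κ x, p y :=
  Measure.ae_ae_of_ae_comp (by rwa [hκ.def])

lemma ae_integrable_of_invariant (hκ : κ.Invariant π) (hf : Integrable f π) :
    ∀ᵐ x ∂π, Integrable f (κ x) :=
  Measure.ae_integrable_of_integrable_comp (by rwa [hκ.def])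

lemma comp_const_unit_of_invariant (hκ : κ.Invariant π) :
    (κ ∘ₖ Kernel.const Unit π) () = π := by
  rw [Kernel.comp_const, hκ.def, Kernel.const_apply]

lemma integrable_integral_of_invariant (hκ : κ.Invariant π) (hf : Integrable f π) :
    Integrable (fun x ↦ ∫ y, f y ∂κ x) π := by
  have h : Integrable f ((κ ∘ₖ Kernel.const Unit π) ()) := by
    rwa [comp_const_unit_of_invariant hκ]
  exact h.integral_comp

lemma integral_integral_of_invariant (hκ : κ.Invariant π) (hf : Integrable f π) :
    ∫ x, ∫ y, f y ∂κ x ∂π = ∫ y, f y ∂π := by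
  have h : Integrable f ((κ ∘ₖ Kernel.const Unit π) ()) := by
    rwa [comp_const_unit_of_invariant hκ]
  have h' := Kernel.integral_comp h
  rwa [comp_const_unit_of_invariant hκ, eq_comm] at h'

lemma ae_centeredOp_add (hκ : κ.Invariant π) (hf : Integrable f π) (hg : Integrable g π) :
    centeredOp κ π (fun x ↦ f x + g x) =ᵐ[π] fun x ↦ centeredOp κ π f x + centeredOp κ π g x := by
  filter_upwards [ae_integrable_of_invariant hκ hf, ae_integrable_of_invariant hκ hg] with x hfx hgx
  simp only [centeredOp, integral_add hfx hgx, integral_add hf hg]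
  ring

variable [IsProbabilityMeasure π]

lemma integrable_centeredOp (hκ : κ.Invariant π) (hf : Integrable f π) :
    Integrable (centeredOp κ π f) π :=
  (integrable_integral_of_invariant hκ hf).sub (integrable_const _)

lemma integral_centeredOp (hκ : κ.Invariant π) (hf : Integrable f π) :
    ∫ x, centeredOp κ π f x ∂π = 0 := by
  simp only [centeredOp]
  rw [integral_sub (integrable_integral_of_invariant hκ hf) (integrable_const _),
    integral_integral_of_invariant hκ hf]
  simp

lemma ae_centeredOp_centeredOp [IsMarkovKernel κ] (hκ : κ.Invariant π) (hη : η.Invariant π)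
    (hf : Integrable f π) :
    centeredOp κ π (centeredOp η π f) =ᵐ[π] centeredOp (η ∘ₖ κ) π f := by
  filter_upwards [ae_integrable_of_invariant hκ (integrable_integral_of_invariant hη hf),
    ae_integrable_of_invariant (hη.comp hκ) hf] with x hηx hηκx
  rw [centeredOp, integral_centeredOp hη hf, sub_zero, centeredOp, Kernel.integral_comp hηκx]
  simp only [centeredOp]
  rw [integral_sub hηx (integrable_const _)]
  simp

lemma HasAllMoments.centeredOp [IsMarkovKernel κ] (hκ : κ.Invariant π)
    (hf : HasAllMoments f π) : HasAllMoments (centeredOp κ π f) π := by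
  refine HasAllMoments.add ?_ (hasAllMoments_const (-∫ y, f y ∂π))
  refine hasAllMoments_of_integrable_pow
    (integrable_integral_of_invariant hκ hf.integrable).aestronglyMeasurable fun k ↦ ?_
  have habs : Integrable (fun x ↦ |f x| ^ k) π := (hf k).integrable_norm_pow'
  refine (integrable_integral_of_invariant hκ habs).mono'
    ((integrable_integral_of_invariant hκ hf.integrable).aestronglyMeasurable.norm.pow k) ?_
  filter_upwards [ae_integrable_of_invariant hκ hf.integrable,
    ae_integrable_of_invariant hκ habs] with x hfx habsx
  rw [Real.norm_of_nonneg (by positivity)]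
  calc |∫ y, f y ∂κ x| ^ k ≤ (∫ y, |f y| ∂κ x) ^ k := by
        gcongr; exact abs_integral_le_integral_abs
    _ ≤ ∫ y, |f y| ^ k ∂κ x := (convexOn_pow k).map_integral_le (by fun_prop) isClosed_Ici
        (ae_of_all _ fun y ↦ abs_nonneg (f y)) hfx.abs habsx

end InvariantKernels

section IteratedKernel

variable {X : Type*} [MeasurableSpace X] (Q : Kernel X X) {π : Measure X}

instance isMarkovKernel_kIter [IsMarkovKernel Q] (n : ℕ) : IsMarkovKernel (kIter Q n) := by
  induction n with
  | zero => unfold kIter; infer_instance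
  | succ n ih => unfold kIter; infer_instance

lemma kIter_one : kIter Q 1 = Q := Kernel.id_comp Q

lemma kIter_succ' (n : ℕ) : kIter Q (n + 1) = Q ∘ₖ kIter Q n := by
  induction n with
  | zero => simp [kIter]
  | succ n ih => exact (congrArg (· ∘ₖ Q) ih).trans (Kernel.comp_assoc Q (kIter Q n) Q)

variable {Q} in
lemma kIter_invariant (hQ : Q.Invariant π) (n : ℕ) : (kIter Q n).Invariant π := by
  induction n with
  | zero => simp [kIter, Kernel.Invariant]
  | succ n ih => exact ih.comp hQ

end IteratedKernel

section GeometricErgodicity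

variable {X : Type*} [MeasurableSpace X] {Q : Kernel X X} {V f : X → ℝ} {c ρ t α : ℝ}
  {π : Measure X}

/-- `Q` converges to its invariant measure `π` at the geometric rate `ρ` in the `V`-weighted total
variation norm, from every deterministic initial state. -/
structure IsGeometricallyErgodic (Q : Kernel X X) (V : X → ℝ) (c ρ : ℝ) (π : Measure X) :
    Prop where
  measurable : Measurable V
  one_le : ∀ x, 1 ≤ V x
  invariant : Q.Invariant π
  integrable : Integrable V π
  one_le_const : 1 ≤ c
  rate_pos : 0 < ρ
  rate_lt_one : ρ < 1
  wTV_le : ∀ x k, wTV V (kIter Q k x) π ≤ c * (V x + ∫ y, V y ∂π) * ρ ^ k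

namespace IsGeometricallyErgodic

lemma of_forall_measure (hV : Measurable V) (hV1 : ∀ x, 1 ≤ V x)
    (hQ : Q.Invariant π) (hπV : Integrable V π) (hc : 1 ≤ c) (h0 : 0 < ρ) (h1 : ρ < 1)
    (herg : ∀ ξ : Measure X, IsProbabilityMeasure ξ → Integrable V ξ → ∀ k : ℕ,
      wTV V (ξ.bind fun x ↦ kIter Q k x) π ≤ c * ((∫ x, V x ∂ξ) + ∫ x, V x ∂π) * ρ ^ k) :
    IsGeometricallyErgodic Q V c ρ π where
  measurable := hV
  one_le := hV1
  invariant := hQ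
  integrable := hπV
  one_le_const := hc
  rate_pos := h0
  rate_lt_one := h1
  wTV_le x k := by
    have hx := herg (Measure.dirac x) inferInstance
      (integrable_dirac' hV.stronglyMeasurable enorm_lt_top) k
    rwa [Measure.dirac_bind (kIter Q k).measurable,
      integral_dirac' V x hV.stronglyMeasurable] at hx

variable (h : IsGeometricallyErgodic Q V c ρ π)

include h

lemma integrable_rpow (hα : α ≤ 1) : Integrable (fun x ↦ V x ^ α) π := by
  refine h.integrable.mono' (h.measurable.pow_const α).aestronglyMeasurable
    (ae_of_all _ fun x ↦ ?_)
  have hVx := h.one_le x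
  rw [Real.norm_of_nonneg (by positivity)]
  exact (Real.rpow_le_rpow_of_exponent_le hVx hα).trans_eq (Real.rpow_one _)

variable [IsProbabilityMeasure π]

lemma one_le_integral : 1 ≤ ∫ x, V x ∂π := by
  simpa using integral_mono (μ := π) (integrable_const (1 : ℝ)) h.integrable h.one_le

lemma two_le_const_mul_integral : 2 ≤ 2 * c * ∫ x, V x ∂π := by
  nlinarith [h.one_le_integral, h.one_le_const]

lemma wTV_le_two_mul (x : X) (j : ℕ) :
    wTV V (kIter Q j x) π ≤ 2 * (c * (∫ y, V y ∂π) * V x * ρ ^ j) := by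
  have hc := h.one_le_const
  have hρ := h.rate_pos
  have hV := mul_nonneg (sub_nonneg.2 (h.one_le x)) (sub_nonneg.2 h.one_le_integral)
  calc wTV V (kIter Q j x) π ≤ c * (V x + ∫ y, V y ∂π) * ρ ^ j := h.wTV_le x j
    _ ≤ c * (2 * ((∫ y, V y ∂π) * V x)) * ρ ^ j := by
        gcongr; nlinarith [h.one_le x, h.one_le_integral]
    _ = 2 * (c * (∫ y, V y ∂π) * V x * ρ ^ j) := by ring

lemma ae_abs_centeredOp_kIter_le [IsMarkovKernel Q] (h0 : 0 ≤ α) (h1 : α ≤ 1) (ht : 0 ≤ t)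
    (hf : Integrable f π) (hfV : ∀ᵐ x ∂π, |f x| ≤ t * V x ^ α) (j : ℕ) :
    ∀ᵐ x ∂π, |centeredOp (kIter Q j) π f x| ≤
      t * (2 * c * ∫ x, V x ∂π) * (ρ ^ α) ^ j * V x ^ α := by
  have hinv := kIter_invariant h.invariant j
  have hρ := h.rate_pos
  have hcP : 1 ≤ c * ∫ x, V x ∂π := by linarith [h.two_le_const_mul_integral]
  filter_upwards [ae_ae_of_invariant hinv hfV, ae_integrable_of_invariant hinv hf,
    ae_integrable_of_invariant hinv h.integrable] with x hfVx hfx hVx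
  have hx := h.one_le x
  calc |centeredOp (kIter Q j) π f x|
      ≤ t * (2 * (c * (∫ x, V x ∂π) * V x * ρ ^ j) ^ α) :=
        abs_integral_sub_integral_le_of_wTV_le (fun y ↦ zero_le_one.trans (h.one_le y)) hVx
          h.integrable hfx hf h0 h1 ht (by positivity) hfVx hfV (h.wTV_le_two_mul x j)
    _ = t * (2 * ((c * ∫ x, V x ∂π) ^ α * V x ^ α * (ρ ^ α) ^ j)) := by
        rw [Real.mul_rpow (by positivity) (by positivity),
          Real.mul_rpow (by positivity) (by positivity), Real.rpow_pow_comm hρ.le]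
    _ ≤ t * (2 * ((c * ∫ x, V x ∂π) * V x ^ α * (ρ ^ α) ^ j)) := by
        gcongr
        exact (Real.rpow_le_rpow_of_exponent_le hcP h1).trans_eq (Real.rpow_one _)
    _ = t * (2 * c * ∫ x, V x ∂π) * (ρ ^ α) ^ j * V x ^ α := by ring

end IsGeometricallyErgodic

end GeometricErgodicity

section RecursiveWeights

variable {C r : ℝ}

/-- The size of the order-`k` coefficient of `(Q - π) (tiltedIterate Q π Y l)`, relative to
`h ^ k * V ^ (k * β)`, when `|Y| ≤ h * V ^ β` and `r = ρ ^ β`. -/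
def centeredWeight (C r : ℝ) : ℕ → ℕ → ℝ
  | 0, _ => C * r
  | l + 1, k => C * r * ∑ m ∈ Ico 1 k, centeredWeight C r l m + r * centeredWeight C r l k

/-- The size of the integral of the order-`k` coefficient of `tiltedIterate Q π Y l`, relative to
`h ^ k * ∫ V`, when `|Y| ≤ h * V ^ β` and `r = ρ ^ β`. -/
def forcingWeight (C r : ℝ) : ℕ → ℕ → ℝ
  | 0, _ => 1
  | l + 1, k => ∑ m ∈ Ico 1 k, centeredWeight C r l m

lemma centeredWeight_zero (k : ℕ) : centeredWeight C r 0 k = C * r * forcingWeight C r 0 k :=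
  (mul_one _).symm

lemma centeredWeight_succ (l k : ℕ) : centeredWeight C r (l + 1) k =
    C * r * forcingWeight C r (l + 1) k + r * centeredWeight C r l k := rfl

lemma centeredWeight_nonneg (hC : 0 ≤ C) (hr : 0 ≤ r) (l k : ℕ) : 0 ≤ centeredWeight C r l k := by
  induction l generalizing k with
  | zero => exact mul_nonneg hC hr
  | succ l ih =>
    exact add_nonneg (mul_nonneg (mul_nonneg hC hr) (sum_nonneg fun m _ ↦ ih m))
      (mul_nonneg hr (ih k))

lemma forcingWeight_nonneg (hC : 0 ≤ C) (hr : 0 ≤ r) (l k : ℕ) : 0 ≤ forcingWeight C r l k := by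
  cases l with
  | zero => exact zero_le_one
  | succ l => exact sum_nonneg fun m _ ↦ centeredWeight_nonneg hC hr l m

lemma forcingWeight_two_le (hC : 1 ≤ C) (l : ℕ) : forcingWeight C r l 2 ≤ C * r ^ l := by
  have hone (l : ℕ) : centeredWeight C r l 1 = C * r ^ (l + 1) := by
    induction l with
    | zero => simp [centeredWeight]
    | succ l ih => simp only [centeredWeight, Ico_self, sum_empty, ih]; ring
  cases l with
  | zero => simpa [forcingWeight] using hC
  | succ l => simp [forcingWeight, hone]

lemma sum_centeredWeight_le (hC : 0 ≤ C) (hr : 0 ≤ r) (hr1 : r < 1) (k N : ℕ) :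
    ∑ l ∈ range N, centeredWeight C r l k ≤
      C * r / (1 - r) * ∑ l ∈ range N, forcingWeight C r l k := by
  have hstep : ∑ l ∈ range N, centeredWeight C r l k ≤
      C * r * ∑ l ∈ range N, forcingWeight C r l k +
        r * ∑ l ∈ range N, centeredWeight C r l k := by
    cases N with
    | zero => simp
    | succ N =>
      calc ∑ l ∈ range (N + 1), centeredWeight C r l k
          = C * r * ∑ l ∈ range (N + 1), forcingWeight C r l k +
              r * ∑ l ∈ range N, centeredWeight C r l k := by
            simp only [sum_range_succ' _ N, centeredWeight_zero, centeredWeight_succ,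
              sum_add_distrib, ← mul_sum]
            ring
        _ ≤ _ := by
            gcongr with l
            · exact fun l _ _ ↦ centeredWeight_nonneg hC hr l k
            · exact N.le_succ
  rw [div_mul_eq_mul_div, le_div_iff₀ (sub_pos.2 hr1)]
  linarith

lemma sum_forcingWeight_le (hC : 1 ≤ C) (hr : 0 ≤ r) (hr1 : r < 1) {k : ℕ} (hk : 1 ≤ k) (N : ℕ) :
    ∑ l ∈ range N, forcingWeight C r l k ≤ (C / (1 - r)) ^ (k - 1) := by
  have hC0 : 0 ≤ C := zero_le_one.trans hC
  have hpos : 0 < 1 - r := sub_pos.2 hr1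
  set a := C * r / (1 - r) with ha
  have ha0 : 0 ≤ a := by positivity
  have ha1 : a + 1 ≤ C / (1 - r) := by
    rw [ha, div_add_one hpos.ne', div_le_div_iff_of_pos_right hpos]
    nlinarith
  refine le_trans ?_ (pow_le_pow_left₀ (by positivity) ha1 (k - 1))
  induction k using Nat.strong_induction_on with
  | _ k ih =>
    cases N with
    | zero => simpa using by positivity
    | succ N =>
      have hinner (m : ℕ) (hm : m ∈ Ico 1 k) :
          ∑ l ∈ range N, centeredWeight C r l m ≤ a * (a + 1) ^ (m - 1) := by
        obtain ⟨hm1, hmk⟩ := mem_Ico.1 hm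
        refine (sum_centeredWeight_le hC0 hr hr1 m N).trans
          (mul_le_mul_of_nonneg_left ?_ ha0)
        refine le_trans ?_ (ih m hmk hm1)
        exact sum_le_sum_of_subset_of_nonneg (range_mono N.le_succ)
          fun l _ _ ↦ forcingWeight_nonneg hC0 hr l m
      calc ∑ l ∈ range (N + 1), forcingWeight C r l k
          = ∑ m ∈ Ico 1 k, ∑ l ∈ range N, centeredWeight C r l m + 1 := by
            rw [sum_range_succ', sum_comm]; rfl
        _ ≤ ∑ m ∈ Ico 1 k, a * (a + 1) ^ (m - 1) + 1 := by
            gcongr with m hm; exact hinner m hm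
        _ = (∑ i ∈ range (k - 1), (a + 1) ^ i) * a + 1 := by
            rw [sum_Ico_eq_sum_range, ← mul_sum, mul_comm]
            simp only [Nat.add_sub_cancel_left]
        _ = (a + 1) ^ (k - 1) := geom_sum_mul_add a (k - 1)

end RecursiveWeights

section TiltedIterates

open PowerSeries

variable {X : Type*} [MeasurableSpace X] (Q : Kernel X X) (π : Measure X) (Y : X → ℝ)

/-- The function `e ^ (z * Y) * ((Q - π) (e ^ (z * Y) * ·)) ^ l 1`, as a power series in `z`. -/
def tiltedIterate : ℕ → X → ℝ⟦X⟧
  | 0, x => rescale (Y x) (exp ℝ)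
  | l + 1, x => rescale (Y x) (exp ℝ) *
      mk fun k ↦ centeredOp Q π (fun y ↦ coeff k (tiltedIterate l y)) x

/-- The part of the order-`k` coefficient of `tiltedIterate Q π Y l` that comes from coefficients
of lower order of the preceding iterate. -/
def tiltedForcing : ℕ → ℕ → X → ℝ
  | 0, k, x => Y x ^ k / k.factorial
  | l + 1, k, x => ∑ m ∈ Ico 1 k, Y x ^ (k - m) / (k - m).factorial *
      centeredOp Q π (fun y ↦ coeff m (tiltedIterate Q π Y l y)) x

variable {Q π Y}

lemma coeff_tiltedIterate_zero (k : ℕ) (x : X) :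
    coeff k (tiltedIterate Q π Y 0 x) = tiltedForcing Q π Y 0 k x := coeff_rescale_exp _ _

lemma coeff_tiltedIterate_succ_eq_sum (l k : ℕ) (x : X) :
    coeff k (tiltedIterate Q π Y (l + 1) x) = ∑ m ∈ range (k + 1),
      Y x ^ (k - m) / (k - m).factorial *
        centeredOp Q π (fun y ↦ coeff m (tiltedIterate Q π Y l y)) x := by
  rw [tiltedIterate, mul_comm, coeff_mul]
  simp only [coeff_mk, coeff_rescale_exp]
  rw [Nat.sum_antidiagonal_eq_sum_range_succ fun i j ↦
    centeredOp Q π (fun y ↦ coeff i (tiltedIterate Q π Y l y)) x * (Y x ^ j / j.factorial)]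
  exact sum_congr rfl fun m _ ↦ mul_comm _ _

variable [IsProbabilityMeasure π] [IsMarkovKernel Q]

lemma HasAllMoments.pow_div_factorial (hY : HasAllMoments Y π) (k : ℕ) :
    HasAllMoments (fun x ↦ Y x ^ k / k.factorial) π := by
  simpa only [div_eq_inv_mul] using (hY.pow k).const_mul (k.factorial : ℝ)⁻¹

lemma HasAllMoments.coeff_tiltedIterate (hQ : Q.Invariant π) (hY : HasAllMoments Y π) (l k : ℕ) :
    HasAllMoments (fun x ↦ coeff k (tiltedIterate Q π Y l x)) π := by
  induction l generalizing k with
  | zero => simpa only [coeff_tiltedIterate_zero, tiltedForcing] using hY.pow_div_factorial k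
  | succ l ih =>
    simp only [coeff_tiltedIterate_succ_eq_sum]
    exact .sum fun m _ ↦ (hY.pow_div_factorial _).mul ((ih m).centeredOp hQ)

lemma HasAllMoments.tiltedForcing (hQ : Q.Invariant π) (hY : HasAllMoments Y π) (l k : ℕ) :
    HasAllMoments (tiltedForcing Q π Y l k) π := by
  cases l with
  | zero => exact hY.pow_div_factorial k
  | succ l =>
    exact .sum fun m _ ↦
      (hY.pow_div_factorial _).mul ((hY.coeff_tiltedIterate hQ l m).centeredOp hQ)

lemma centeredOp_const (a : ℝ) : centeredOp Q π (fun _ ↦ a) = 0 := by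
  ext x; simp [centeredOp]

lemma centeredOp_coeff_zero_tiltedIterate (l : ℕ) :
    centeredOp Q π (fun y ↦ coeff 0 (tiltedIterate Q π Y l y)) = 0 := by
  induction l with
  | zero => simp only [coeff_tiltedIterate_zero, tiltedForcing, pow_zero, centeredOp_const]
  | succ l ih =>
    simp only [coeff_tiltedIterate_succ_eq_sum, zero_add, sum_range_one, ih, Pi.zero_apply,
      mul_zero, centeredOp_const]

lemma coeff_tiltedIterate_succ (l : ℕ) {k : ℕ} (hk : 1 ≤ k) (x : X) :
    coeff k (tiltedIterate Q π Y (l + 1) x) = tiltedForcing Q π Y (l + 1) k x +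
      centeredOp Q π (fun y ↦ coeff k (tiltedIterate Q π Y l y)) x := by
  rw [coeff_tiltedIterate_succ_eq_sum, sum_range_succ, range_eq_Ico, sum_eq_sum_Ico_succ_bot hk,
    centeredOp_coeff_zero_tiltedIterate]
  simp [tiltedForcing]

lemma integral_coeff_tiltedIterate (hQ : Q.Invariant π) (hY : HasAllMoments Y π) (l : ℕ) {k : ℕ}
    (hk : 1 ≤ k) :
    ∫ x, coeff k (tiltedIterate Q π Y l x) ∂π = ∫ x, tiltedForcing Q π Y l k x ∂π := by
  cases l with
  | zero => simp only [coeff_tiltedIterate_zero]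
  | succ l =>
    have hl := (hY.coeff_tiltedIterate hQ l k).integrable
    simp only [coeff_tiltedIterate_succ l hk]
    rw [integral_add (hY.tiltedForcing hQ (l + 1) k).integrable (integrable_centeredOp hQ hl),
      integral_centeredOp hQ hl, add_zero]

lemma integral_coeff_zero_tiltedIterate (l : ℕ) :
    ∫ x, coeff 0 (tiltedIterate Q π Y l x) ∂π = if l = 0 then 1 else 0 := by
  cases l with
  | zero => simp only [coeff_tiltedIterate_zero, tiltedForcing]; simp
  | succ l =>
    simp only [coeff_tiltedIterate_succ_eq_sum, zero_add, sum_range_one,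
      centeredOp_coeff_zero_tiltedIterate, Pi.zero_apply, mul_zero]
    simp

lemma integral_coeff_one_tiltedIterate (hQ : Q.Invariant π) (hY : HasAllMoments Y π)
    (hY0 : ∫ x, Y x ∂π = 0) (l : ℕ) : ∫ x, coeff 1 (tiltedIterate Q π Y l x) ∂π = 0 := by
  rw [integral_coeff_tiltedIterate hQ hY l le_rfl]
  cases l <;> simp [tiltedForcing, hY0]

end TiltedIterates

section TiltedIterateBounds

open PowerSeries

variable {X : Type*} [MeasurableSpace X] {Q : Kernel X X} {V Y : X → ℝ} {c ρ r s α β : ℝ}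
  {π : Measure X}

lemma abs_pow_div_factorial_le {y v : ℝ} (hv : 0 ≤ v) (hy : |y| ≤ s * v ^ β) (j : ℕ) :
    |y ^ j / j.factorial| ≤ s ^ j * v ^ (j * β) := by
  calc |y ^ j / j.factorial| = |y| ^ j / j.factorial := by rw [abs_div, abs_pow, Nat.abs_cast]
    _ ≤ |y| ^ j := div_le_self (by positivity) (by exact_mod_cast j.factorial_pos)
    _ ≤ (s * v ^ β) ^ j := by gcongr
    _ = s ^ j * v ^ (j * β) := by rw [mul_pow, mul_comm (j : ℝ), Real.rpow_mul_natCast hv]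

namespace IsGeometricallyErgodic

variable (h : IsGeometricallyErgodic Q V c ρ π)

include h

lemma ae_abs_tiltedForcing_le (hs : 0 ≤ s) (hYV : ∀ x, |Y x| ≤ s * V x ^ β) {k : ℕ}
    (hlower : ∀ m ∈ Ico 1 k, ∀ l, ∀ᵐ x ∂π,
      |centeredOp Q π (fun y ↦ coeff m (tiltedIterate Q π Y l y)) x| ≤
        s ^ m * centeredWeight (2 * c * ∫ x, V x ∂π) (ρ ^ β) l m * V x ^ (m * β)) (l : ℕ) :
    ∀ᵐ x ∂π, |tiltedForcing Q π Y l k x| ≤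
      s ^ k * forcingWeight (2 * c * ∫ x, V x ∂π) (ρ ^ β) l k * V x ^ (k * β) := by
  have hpow (j : ℕ) (x : X) :=
    abs_pow_div_factorial_le (zero_le_one.trans (h.one_le x)) (hYV x) j
  cases l with
  | zero => simpa [tiltedForcing, forcingWeight] using ae_of_all π (hpow k)
  | succ l =>
    filter_upwards [(Filter.eventually_all_finset (Ico 1 k)).2 fun m hm ↦ hlower m hm l] with x hx
    have hVx := zero_lt_one.trans_le (h.one_le x)
    calc |tiltedForcing Q π Y (l + 1) k x|
        ≤ ∑ m ∈ Ico 1 k, |Y x ^ (k - m) / (k - m).factorial| *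
            |centeredOp Q π (fun y ↦ coeff m (tiltedIterate Q π Y l y)) x| := by
          simp only [tiltedForcing, ← abs_mul]
          exact abs_sum_le_sum_abs _ _
      _ ≤ ∑ m ∈ Ico 1 k, s ^ (k - m) * V x ^ ((k - m : ℕ) * β) *
            (s ^ m * centeredWeight (2 * c * ∫ x, V x ∂π) (ρ ^ β) l m * V x ^ (m * β)) := by
          gcongr with m hm
          · exact hpow (k - m) x
          · exact hx m hm
      _ = s ^ k * forcingWeight (2 * c * ∫ x, V x ∂π) (ρ ^ β) (l + 1) k * V x ^ (k * β) := by
          rw [forcingWeight, mul_sum, sum_mul]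
          refine sum_congr rfl fun m hm ↦ ?_
          have hmk := (mem_Ico.1 hm).2.le
          have hV : V x ^ (k * β) = V x ^ ((k - m : ℕ) * β) * V x ^ (m * β) := by
            rw [← Real.rpow_add hVx, ← add_mul, Nat.cast_sub hmk, sub_add_cancel]
          rw [hV, ← pow_sub_mul_pow s hmk]
          ring

variable [IsProbabilityMeasure π] [IsMarkovKernel Q]

lemma ae_abs_centeredOp_kIter_le_of_recursion (h0 : 0 ≤ α) (h1 : α ≤ 1) (hr : ρ ^ α ≤ r)
    {f ψ : ℕ → X → ℝ} {p w : ℕ → ℝ} (hf : ∀ l, Integrable (f l) π) (hp : ∀ l, 0 ≤ p l)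
    (hfV : ∀ l, ∀ᵐ x ∂π, |f l x| ≤ p l * V x ^ α)
    (hψ0 : ψ 0 = f 0) (hψ : ∀ l, ψ (l + 1) = fun x ↦ f (l + 1) x + centeredOp Q π (ψ l) x)
    (hw0 : w 0 = 2 * c * (∫ x, V x ∂π) * r * p 0)
    (hw : ∀ l, w (l + 1) = 2 * c * (∫ x, V x ∂π) * r * p (l + 1) + r * w l) (l j : ℕ) :
    ∀ᵐ x ∂π, |centeredOp (kIter Q (j + 1)) π (ψ l) x| ≤ r ^ j * w l * V x ^ α := by
  have hC : 0 ≤ 2 * c * ∫ x, V x ∂π := zero_le_two.trans h.two_le_const_mul_integral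
  have hρ := h.rate_pos
  have hψi (l : ℕ) : Integrable (ψ l) π := by
    induction l with
    | zero => exact hψ0 ▸ hf 0
    | succ l ih => exact hψ l ▸ (hf (l + 1)).add (integrable_centeredOp h.invariant ih)
  have hforcing (l j : ℕ) : ∀ᵐ x ∂π, |centeredOp (kIter Q (j + 1)) π (f l) x| ≤
      r ^ j * (2 * c * (∫ x, V x ∂π) * r * p l) * V x ^ α := by
    filter_upwards [h.ae_abs_centeredOp_kIter_le h0 h1 (hp l) (hf l) (hfV l) (j + 1)] with x hx
    have hVx := zero_le_one.trans (h.one_le x)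
    have hpl := hp l
    calc _ ≤ p l * (2 * c * ∫ x, V x ∂π) * (ρ ^ α) ^ (j + 1) * V x ^ α := hx
      _ ≤ p l * (2 * c * ∫ x, V x ∂π) * r ^ (j + 1) * V x ^ α := by gcongr
      _ = _ := by ring
  induction l generalizing j with
  | zero => simpa only [hψ0, hw0] using hforcing 0 j
  | succ l ih =>
    have hinv := kIter_invariant h.invariant (j + 1)
    filter_upwards [hforcing (l + 1) j, ih (j + 1),
      ae_centeredOp_add hinv (hf (l + 1)) (integrable_centeredOp h.invariant (hψi l)),
      ae_centeredOp_centeredOp hinv h.invariant (hψi l)] with x hfx hθx hadd hcomp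
    rw [hψ, hadd, hcomp, ← kIter_succ', hw]
    calc _ ≤ _ := (abs_add_le _ _).trans (add_le_add hfx hθx)
      _ = _ := by ring

lemma ae_abs_centeredOp_tiltedIterate_le (hY : HasAllMoments Y π) (hs : 0 ≤ s) (hβ : 0 ≤ β)
    (hYV : ∀ x, |Y x| ≤ s * V x ^ β) {k : ℕ} (hk : 1 ≤ k) (hkβ : k * β ≤ 1) (l : ℕ) :
    ∀ᵐ x ∂π, |centeredOp Q π (fun y ↦ coeff k (tiltedIterate Q π Y l y)) x| ≤
      s ^ k * centeredWeight (2 * c * ∫ x, V x ∂π) (ρ ^ β) l k * V x ^ (k * β) := by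
  induction k using Nat.strong_induction_on generalizing l with
  | _ k ih =>
    have hρ := h.rate_pos
    have hC : 0 ≤ 2 * c * ∫ x, V x ∂π := zero_le_two.trans h.two_le_const_mul_integral
    have hk' : (1 : ℝ) ≤ k := by exact_mod_cast hk
    have hrate : ρ ^ (k * β) ≤ ρ ^ β :=
      Real.rpow_le_rpow_of_exponent_ge hρ h.rate_lt_one.le (le_mul_of_one_le_left hβ hk')
    have hforcing := h.ae_abs_tiltedForcing_le hs hYV (k := k) fun m hm ↦ by
      obtain ⟨hm1, hmk⟩ := mem_Ico.1 hm
      exact ih m hmk hm1 (le_trans (by gcongr) hkβ)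
    have key := h.ae_abs_centeredOp_kIter_le_of_recursion (by positivity) hkβ hrate
      (fun l ↦ (hY.tiltedForcing h.invariant l k).integrable)
      (fun l ↦ mul_nonneg (pow_nonneg hs k) (forcingWeight_nonneg hC (by positivity) l k)) hforcing
      (ψ := fun l y ↦ coeff k (tiltedIterate Q π Y l y))
      (w := fun l ↦ s ^ k * centeredWeight (2 * c * ∫ x, V x ∂π) (ρ ^ β) l k)
      (funext (coeff_tiltedIterate_zero k)) (fun l ↦ funext (coeff_tiltedIterate_succ l hk))
      (by rw [centeredWeight_zero]; ring) (fun l ↦ by rw [centeredWeight_succ]; ring) l 0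
    simpa only [zero_add, kIter_one, pow_zero, one_mul] using key

lemma abs_integral_coeff_tiltedIterate_le (hY : HasAllMoments Y π) (hs : 0 ≤ s) (hβ : 0 ≤ β)
    (hYV : ∀ x, |Y x| ≤ s * V x ^ β) {k : ℕ} (hk : 1 ≤ k) (hkβ : k * β ≤ 1) (l : ℕ) :
    |∫ x, coeff k (tiltedIterate Q π Y l x) ∂π| ≤
      s ^ k * forcingWeight (2 * c * ∫ x, V x ∂π) (ρ ^ β) l k * (c * ∫ x, V x ∂π) := by
  have hρ := h.rate_pos
  have hforcing := h.ae_abs_tiltedForcing_le hs hYV (k := k) fun m hm ↦ by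
    obtain ⟨hm1, hmk⟩ := mem_Ico.1 hm
    exact h.ae_abs_centeredOp_tiltedIterate_le hY hs hβ hYV hm1 (le_trans (by gcongr) hkβ)
  have hw : 0 ≤ s ^ k * forcingWeight (2 * c * ∫ x, V x ∂π) (ρ ^ β) l k :=
    mul_nonneg (pow_nonneg hs k) (forcingWeight_nonneg
      (zero_le_two.trans h.two_le_const_mul_integral) (by positivity) l k)
  rw [integral_coeff_tiltedIterate h.invariant hY l hk]
  calc |∫ x, tiltedForcing Q π Y l k x ∂π|
      ≤ ∫ x, s ^ k * forcingWeight (2 * c * ∫ x, V x ∂π) (ρ ^ β) l k * V x ∂π := by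
        refine norm_integral_le_of_norm_le (G := ℝ) (h.integrable.const_mul _) ?_
        filter_upwards [hforcing l] with x hx
        refine hx.trans (mul_le_mul_of_nonneg_left ?_ hw)
        exact (Real.rpow_le_rpow_of_exponent_le (h.one_le x) hkβ).trans_eq (Real.rpow_one _)
    _ = s ^ k * forcingWeight (2 * c * ∫ x, V x ∂π) (ρ ^ β) l k * ∫ x, V x ∂π :=
        integral_const_mul _ _
    _ ≤ _ := by
        gcongr
        exact le_mul_of_one_le_left (zero_le_one.trans h.one_le_integral) h.one_le_const

end IsGeometricallyErgodic

end TiltedIterateBounds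

section RenewalKernel

open PowerSeries

/-- The coefficientwise integral of a power series valued function. -/
def seriesIntegral {Ω : Type*} [MeasurableSpace Ω] (μ : Measure Ω) (f : Ω → ℝ⟦X⟧) : ℝ⟦X⟧ :=
  mk fun k ↦ ∫ ω, coeff k (f ω) ∂μ

variable {X : Type*} [MeasurableSpace X]

/-- The kernel of the renewal equation satisfied by the moment generating series of the partial
sums of `Y` along a stationary Markov chain with kernel `Q`. -/
def renewalKernel (Q : Kernel X X) (π : Measure X) (Y : X → ℝ) (l : ℕ) : ℝ⟦X⟧ :=
  seriesIntegral π (tiltedIterate Q π Y l) - if l = 0 then 1 else 0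

/-- The power series whose coefficients `cumulantBound s C ρ k` control those of the renewal
kernel, which start in order two. -/
def cumulantSeries (s : ℕ → ℝ) (C ρ : ℝ) : ℝ⟦X⟧ :=
  mk fun k ↦ if k < 2 then 0 else cumulantBound s C ρ k

lemma coeff_cumulantSeries {s : ℕ → ℝ} {C ρ : ℝ} {k : ℕ} (hk : 2 ≤ k) :
    coeff k (cumulantSeries s C ρ) = cumulantBound s C ρ k := by
  rw [cumulantSeries, coeff_mk, if_neg hk.not_gt]

lemma X_sq_dvd_cumulantSeries (s : ℕ → ℝ) (C ρ : ℝ) :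
    (PowerSeries.X : ℝ⟦X⟧) ^ 2 ∣ cumulantSeries s C ρ :=
  X_pow_dvd_iff.2 fun k hk ↦ by rw [cumulantSeries, coeff_mk, if_pos hk]

lemma sum_range_succ_mul_pow_le {r : ℝ} (hr : 0 ≤ r) (hr1 : r < 1) (N : ℕ) :
    ∑ l ∈ range N, (l + 1 : ℝ) * r ^ l ≤ (1 / (1 - r)) ^ 2 := by
  have hnorm : ‖r‖ < 1 := by rwa [Real.norm_of_nonneg hr]
  have hsum := hasSum_choose_mul_geometric_of_norm_lt_one 1 hnorm
  simp only [Nat.choose_one_right, Nat.cast_add, Nat.cast_one, one_add_one_eq_two, ← one_div_pow]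
    at hsum
  exact sum_le_hasSum (range N) (fun l _ ↦ by positivity) hsum

variable {Q : Kernel X X} {V Y : X → ℝ} {c ρ : ℝ} {s : ℕ → ℝ} {π : Measure X}

lemma coeff_renewalKernel_of_pos {k : ℕ} (hk : k ≠ 0) (l : ℕ) :
    coeff k (renewalKernel Q π Y l) = ∫ x, coeff k (tiltedIterate Q π Y l x) ∂π := by
  rw [renewalKernel, map_sub, seriesIntegral, coeff_mk]
  split_ifs <;> simp [coeff_one, hk]

variable [IsProbabilityMeasure π] [IsMarkovKernel Q]

lemma X_sq_dvd_renewalKernel (hQ : Q.Invariant π) (hY : HasAllMoments Y π)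
    (hY0 : ∫ x, Y x ∂π = 0) (l : ℕ) : PowerSeries.X ^ 2 ∣ renewalKernel Q π Y l := by
  refine X_pow_dvd_iff.2 fun k hk ↦ ?_
  interval_cases k
  · rw [renewalKernel, map_sub, seriesIntegral, coeff_mk, integral_coeff_zero_tiltedIterate]
    split_ifs <;> simp
  · rw [coeff_renewalKernel_of_pos one_ne_zero, integral_coeff_one_tiltedIterate hQ hY hY0]

namespace IsGeometricallyErgodic

variable (h : IsGeometricallyErgodic Q V c ρ π) (hY : HasAllMoments Y π) (hs : ∀ k, 0 ≤ s k)
  (hYV : ∀ k : ℕ, 1 ≤ k → ∀ x, |Y x| ≤ s k * V x ^ (1 / (2 * (k : ℝ))))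

include h hY hs hYV

lemma abs_coeff_renewalKernel_le {k : ℕ} (hk : 1 ≤ k) (l : ℕ) :
    |coeff k (renewalKernel Q π Y l)| ≤ s k ^ k *
      forcingWeight (2 * c * ∫ x, V x ∂π) (ρ ^ (1 / (2 * (k : ℝ)))) l k *
        (2 * c * (∫ x, V x ∂π) / 2) := by
  have hk0 : (k : ℝ) ≠ 0 := by positivity
  have hkβ : k * (1 / (2 * (k : ℝ))) ≤ 1 := by field_simp; norm_num
  rw [coeff_renewalKernel_of_pos (Nat.one_le_iff_ne_zero.1 hk)]
  exact (h.abs_integral_coeff_tiltedIterate_le hY (hs k) (by positivity) (hYV k hk) hk hkβ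
    l).trans_eq (by ring)

lemma sum_abs_coeff_renewalKernel_le {k : ℕ} (hk : 1 ≤ k) (N : ℕ) :
    ∑ l ∈ range N, |coeff k (renewalKernel Q π Y l)| ≤
      cumulantBound s (2 * c * ∫ x, V x ∂π) ρ k := by
  have hC := h.two_le_const_mul_integral
  have hρ := h.rate_pos
  have hk' : 0 < 1 / (2 * (k : ℝ)) := by positivity
  have hrate : ρ ^ (1 / (2 * (k : ℝ))) < 1 := Real.rpow_lt_one hρ.le h.rate_lt_one hk'
  have hsk := hs k
  calc _ ≤ _ := sum_le_sum fun l _ ↦ h.abs_coeff_renewalKernel_le hY hs hYV hk l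
    _ = s k ^ k * (∑ l ∈ range N,
          forcingWeight (2 * c * ∫ x, V x ∂π) (ρ ^ (1 / (2 * (k : ℝ)))) l k) *
            (2 * c * (∫ x, V x ∂π) / 2) := by rw [mul_sum, sum_mul]
    _ ≤ _ := by
        rw [cumulantBound]
        gcongr
        exact sum_forcingWeight_le (by linarith) (by positivity) hrate hk N

lemma sum_lag_renewalKernel_le (N : ℕ) :
    ∑ l ∈ range N, |coeff 2 (renewalKernel Q π Y l)| *
      ((l + 1) * cumulantBound s (2 * c * ∫ x, V x ∂π) ρ 2) ≤
        lagBound s (2 * c * ∫ x, V x ∂π) ρ := by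
  have hC := h.two_le_const_mul_integral
  have hρ := h.rate_pos
  have hcum0 : 0 ≤ cumulantBound s (2 * c * ∫ x, V x ∂π) ρ 2 := by
    simpa using h.sum_abs_coeff_renewalKernel_le hY hs hYV one_le_two 0
  have hterm := h.abs_coeff_renewalKernel_le hY hs hYV one_le_two
  set C := 2 * c * ∫ x, V x ∂π
  set r := ρ ^ ((1 : ℝ) / 6)
  have hr0 : 0 ≤ r := by positivity
  have hr1 : r < 1 := Real.rpow_lt_one hρ.le h.rate_lt_one (by norm_num)
  have hrate : ρ ^ (1 / (2 * ((2 : ℕ) : ℝ))) ≤ r :=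
    Real.rpow_le_rpow_of_exponent_ge hρ h.rate_lt_one.le (by norm_num)
  set d := s 2 ^ 2 * (C ^ 2 / 2)
  have hcoeff (l : ℕ) : |coeff 2 (renewalKernel Q π Y l)| ≤ d * r ^ l := by
    calc _ ≤ _ := hterm l
      _ ≤ s 2 ^ 2 * (C * r ^ l) * (C / 2) := by
          gcongr
          exact (forcingWeight_two_le (by linarith) l).trans (by gcongr)
      _ = d * r ^ l := by ring
  have hcum : cumulantBound s C ρ 2 ≤ d * (1 / (1 - r)) := by
    calc _ ≤ s 2 ^ 2 * (C / (1 - r)) ^ (2 - 1) * (C / 2) := by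
          rw [cumulantBound]
          gcongr
          exact div_nonneg (by linarith) (by linarith)
      _ = d * (1 / (1 - r)) := by ring
  calc _ ≤ ∑ l ∈ range N, d * r ^ l * ((l + 1) * (d * (1 / (1 - r)))) := by
        gcongr with l
        exact hcoeff l
    _ = d ^ 2 * (1 / (1 - r)) * ∑ l ∈ range N, (l + 1 : ℝ) * r ^ l := by
        rw [mul_sum]; exact sum_congr rfl fun l _ ↦ by ring
    _ ≤ d ^ 2 * (1 / (1 - r)) * (1 / (1 - r)) ^ 2 := by
        gcongr
        exact sum_range_succ_mul_pow_le hr0 hr1 N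
    _ = lagBound s C ρ := by rw [lagBound]; ring

end IsGeometricallyErgodic

end RenewalKernel

section MarkovProperty

variable {X Ω E : Type*} [MeasurableSpace X] [MeasurableSpace Ω] [MeasurableSpace E]
  {P : Measure Ω} {Xs : ℕ → Ω → X} {ξ π : Measure X} {Q : Kernel X X} {Z : Ω → E} {n : ℕ}

/-- The σ-algebra generated by `Xs 0, …, Xs n`. -/
abbrev past (Xs : ℕ → Ω → X) (n : ℕ) : MeasurableSpace Ω :=
  ⨆ i ∈ range (n + 1), MeasurableSpace.comap (Xs i) inferInstance

omit [MeasurableSpace Ω] in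
lemma measurable_past {i : ℕ} (hi : i ≤ n) : Measurable[past Xs n] (Xs i) :=
  measurable_iff_comap_le.2 <| le_iSup₂_of_le (f := fun i (_ : i ∈ range (n + 1)) ↦
    MeasurableSpace.comap (Xs i) inferInstance) i (mem_range_succ_iff.2 hi) le_rfl

lemma _root_.IsMarkovChain.past_le (hX : IsMarkovChain P Xs ξ Q) (n : ℕ) :
    past Xs n ≤ ‹MeasurableSpace Ω› :=
  iSup₂_le fun i _ ↦ (hX.meas i).comap_le

variable [IsProbabilityMeasure P] [IsMarkovKernel Q]

lemma _root_.IsMarkovChain.measure_inter_preimage (hX : IsMarkovChain P Xs ξ Q) {A : Set Ω}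
    (hA : MeasurableSet[past Xs n] A) {B : Set X} (hB : MeasurableSet B) :
    P (A ∩ Xs (n + 1) ⁻¹' B) = ∫⁻ ω in A, Q (Xs n ω) B ∂P := by
  have hBX : MeasurableSet (Xs (n + 1) ⁻¹' B) := hX.meas _ hB
  have hcond : P[(Xs (n + 1) ⁻¹' B).indicator (fun _ ↦ (1 : ℝ)) | past Xs n] =ᵐ[P]
      fun ω ↦ (Q (Xs n ω)).real B := by
    refine (hX.markov n (B.indicator 1) (measurable_one.indicator hB) fun x ↦ ?_).trans
      (ae_of_all _ fun ω ↦ integral_indicator_one hB)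
    by_cases hx : x ∈ B <;> simp [hx]
  have hreal : P.real (A ∩ Xs (n + 1) ⁻¹' B) = ∫ ω in A, (Q (Xs n ω)).real B ∂P := by
    rw [← setIntegral_congr_ae (hX.past_le n _ hA) (hcond.mono fun ω hω _ ↦ hω),
      setIntegral_condExp (hX.past_le n) ((integrable_const (1 : ℝ)).indicator hBX) hA]
    exact ((integral_indicator_one hBX).trans
      (by rw [measureReal_restrict_apply hBX, Set.inter_comm])).symm
  rw [← ofReal_measureReal, hreal, ofReal_integral_eq_lintegral_ofReal
    (integrable_condExp.congr hcond).integrableOn (ae_of_all _ fun ω ↦ measureReal_nonneg)]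
  exact lintegral_congr fun ω ↦ ofReal_measureReal

lemma _root_.IsMarkovChain.map_prod_eq_compProd (hX : IsMarkovChain P Xs ξ Q)
    (hZ : Measurable[past Xs n] Z) :
    P.map (fun ω ↦ ((Z ω, Xs n ω), Xs (n + 1) ω)) =
      P.map (fun ω ↦ (Z ω, Xs n ω)) ⊗ₘ Kernel.prodMkLeft E Q := by
  have hpair : Measurable[past Xs n] fun ω ↦ (Z ω, Xs n ω) := hZ.prodMk (measurable_past le_rfl)
  have hpair' := hpair.mono (hX.past_le n) le_rfl
  have htriple := hpair'.prodMk (hX.meas (n + 1))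
  have := Measure.isProbabilityMeasure_map (μ := P) hpair'.aemeasurable
  have := Measure.isProbabilityMeasure_map (μ := P) htriple.aemeasurable
  refine Measure.ext_prod fun {A B} hA hB ↦ ?_
  rw [Measure.map_apply htriple (hA.prod hB), Measure.compProd_apply_prod hA hB,
    setLIntegral_map hA (Kernel.measurable_coe _ hB) hpair']
  exact hX.measure_inter_preimage (hpair hA) hB

lemma _root_.IsMarkovChain.integral_mul_comp_succ (hX : IsMarkovChain P Xs ξ Q) {Z : Ω → ℝ}
    (hZ : Measurable[past Xs n] Z) {f : X → ℝ} (hf : Measurable f)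
    (hZf : Integrable (fun ω ↦ Z ω * f (Xs (n + 1) ω)) P) :
    ∫ ω, Z ω * f (Xs (n + 1) ω) ∂P = ∫ ω, Z ω * ∫ y, f y ∂Q (Xs n ω) ∂P := by
  have hpair : Measurable fun ω ↦ (Z ω, Xs n ω) :=
    (hZ.mono (hX.past_le n) le_rfl).prodMk (hX.meas n)
  have htriple := hpair.prodMk (hX.meas (n + 1))
  have hF : Measurable fun p : (ℝ × X) × X ↦ p.1.1 * f p.2 := by fun_prop
  have hQf : Measurable fun p : ℝ × X ↦ p.1 * ∫ y, f y ∂Q p.2 :=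
    measurable_fst.mul (hf.stronglyMeasurable.integral_kernel.measurable.comp measurable_snd)
  have hint := (integrable_map_measure hF.aestronglyMeasurable htriple.aemeasurable).2 hZf
  calc ∫ ω, Z ω * f (Xs (n + 1) ω) ∂P
      = ∫ p, p.1.1 * f p.2 ∂P.map fun ω ↦ ((Z ω, Xs n ω), Xs (n + 1) ω) :=
        (integral_map htriple.aemeasurable hF.aestronglyMeasurable).symm
    _ = ∫ p, ∫ y, p.1 * f y ∂Q p.2 ∂P.map fun ω ↦ (Z ω, Xs n ω) := by
        rw [hX.map_prod_eq_compProd hZ] at hint ⊢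
        exact Measure.integral_compProd hint
    _ = ∫ p, p.1 * ∫ y, f y ∂Q p.2 ∂P.map fun ω ↦ (Z ω, Xs n ω) := by
        simp only [integral_const_mul]
    _ = ∫ ω, Z ω * ∫ y, f y ∂Q (Xs n ω) ∂P :=
        integral_map hpair.aemeasurable hQf.aestronglyMeasurable

lemma _root_.IsMarkovChain.measurePreserving (hX : IsMarkovChain P Xs π Q) (hQ : Q.Invariant π)
    (n : ℕ) : MeasurePreserving (Xs n) P π := by
  refine ⟨hX.meas n, ?_⟩
  induction n with
  | zero => exact hX.init
  | succ n ih =>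
    ext B hB
    have h := hX.measure_inter_preimage (n := n) MeasurableSet.univ hB
    rw [Set.univ_inter, Measure.restrict_univ] at h
    rw [Measure.map_apply (hX.meas _) hB, h]
    conv_rhs => rw [← hQ.def, Measure.bind_apply hB Q.measurable.aemeasurable, ← ih,
      lintegral_map (Q.measurable_coe hB) (hX.meas n)]

end MarkovProperty

section RenewalEquation

open PowerSeries

variable {X Ω : Type*} [MeasurableSpace Ω] {P : Measure Ω}
  {Xs : ℕ → Ω → X} {Y : X → ℝ}

lemma coeff_seriesIntegral_mul {f g : Ω → ℝ⟦X⟧} (hf : ∀ k, HasAllMoments (fun ω ↦ coeff k (f ω)) P)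
    (hg : ∀ k, HasAllMoments (fun ω ↦ coeff k (g ω)) P) (k : ℕ) :
    coeff k (seriesIntegral P fun ω ↦ f ω * g ω) =
      ∑ p ∈ antidiagonal k, ∫ ω, coeff p.1 (f ω) * coeff p.2 (g ω) ∂P := by
  rw [seriesIntegral, coeff_mk]
  simp only [coeff_mul]
  exact integral_finsetSum _ fun p _ ↦ ((hf p.1).mul (hg p.2)).integrable

/-- The power series `∑ k, E[S ^ k] / k! * z ^ k`, where `S = Y (Xs 0) + ⋯ + Y (Xs (n - 1))`. -/
def momentSeries (P : Measure Ω) (Y : X → ℝ) (Xs : ℕ → Ω → X) (n : ℕ) : ℝ⟦X⟧ :=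
  seriesIntegral P fun ω ↦ rescale (∑ i ∈ range n, Y (Xs i ω)) (exp ℝ)

lemma coeff_momentSeries (n k : ℕ) : coeff k (momentSeries P Y Xs n) =
    (∫ ω, (∑ i ∈ range n, Y (Xs i ω)) ^ k ∂P) / k.factorial := by
  rw [momentSeries, seriesIntegral, coeff_mk, ← integral_div]
  simp only [coeff_rescale_exp]

lemma momentSeries_zero [IsProbabilityMeasure P] : momentSeries P Y Xs 0 = 1 := by
  ext k
  simp [momentSeries, seriesIntegral, coeff_one]

variable [MeasurableSpace X] {π : Measure X} {Q : Kernel X X}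

/-- The power series `E[e ^ (z * S) * tiltedIterate Q π Y l (Xs n)]` in `z`, where
`S = Y (Xs 0) + ⋯ + Y (Xs (n - 1))`. -/
def tiltedMomentSeries (P : Measure Ω) (Q : Kernel X X) (π : Measure X) (Y : X → ℝ)
    (Xs : ℕ → Ω → X) (n l : ℕ) : ℝ⟦X⟧ :=
  seriesIntegral P fun ω ↦
    rescale (∑ i ∈ range n, Y (Xs i ω)) (exp ℝ) * tiltedIterate Q π Y l (Xs n ω)

lemma tiltedMomentSeries_zero_right (n : ℕ) :
    tiltedMomentSeries P Q π Y Xs n 0 = momentSeries P Y Xs (n + 1) := by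
  simp only [tiltedMomentSeries, momentSeries, tiltedIterate, exp_mul_exp_eq_exp_add,
    sum_range_succ]

lemma measurable_centeredOp {f : X → ℝ} (hf : Measurable f) : Measurable (centeredOp Q π f) :=
  hf.stronglyMeasurable.integral_kernel.measurable.sub_const _

lemma measurable_coeff_tiltedIterate (hY : Measurable Y) (l k : ℕ) :
    Measurable fun x ↦ coeff k (tiltedIterate Q π Y l x) := by
  induction l generalizing k with
  | zero =>
    simp only [coeff_tiltedIterate_zero, tiltedForcing]
    fun_prop
  | succ l ih =>
    simp only [coeff_tiltedIterate_succ_eq_sum]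
    exact measurable_sum _ fun m _ ↦
      ((hY.pow_const _).div_const _).mul (measurable_centeredOp (ih m))

lemma _root_.IsMarkovChain.tiltedMomentSeries_zero_left (hX : IsMarkovChain P Xs π Q)
    (hYmeas : Measurable Y) (l : ℕ) :
    tiltedMomentSeries P Q π Y Xs 0 l = seriesIntegral π (tiltedIterate Q π Y l) := by
  ext k
  have hmap := integral_map (μ := P) (hX.meas 0).aemeasurable
    (measurable_coeff_tiltedIterate (Q := Q) (π := π) hYmeas l k).aestronglyMeasurable
  rw [hX.init] at hmap
  simp [tiltedMomentSeries, seriesIntegral, hmap]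

variable [IsProbabilityMeasure P] [IsProbabilityMeasure π] [IsMarkovKernel Q]

lemma _root_.IsMarkovChain.seriesIntegral_mul_comp_succ (hX : IsMarkovChain P Xs π Q)
    (hQ : Q.Invariant π) {n : ℕ} {Z : Ω → ℝ⟦X⟧}
    (hZ : ∀ k, Measurable[past Xs n] fun ω ↦ coeff k (Z ω))
    (hZm : ∀ k, HasAllMoments (fun ω ↦ coeff k (Z ω)) P) {f : X → ℝ⟦X⟧}
    (hf : ∀ k, Measurable fun x ↦ coeff k (f x))
    (hfm : ∀ k, HasAllMoments (fun x ↦ coeff k (f x)) π) :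
    seriesIntegral P (fun ω ↦ Z ω * f (Xs (n + 1) ω)) =
      seriesIntegral P Z * seriesIntegral π f + seriesIntegral P fun ω ↦
        Z ω * mk fun k ↦ centeredOp Q π (fun y ↦ coeff k (f y)) (Xs n ω) := by
  have hpres := hX.measurePreserving hQ
  have hfm' (k : ℕ) := (hfm k).comp (hpres (n + 1))
  have hRf (k : ℕ) := ((hfm k).centeredOp hQ).comp (hpres n)
  ext k
  rw [coeff_seriesIntegral_mul hZm hfm', map_add, coeff_mul,
    coeff_seriesIntegral_mul hZm (by simpa only [coeff_mk] using hRf), ← sum_add_distrib]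
  refine sum_congr rfl fun p _ ↦ ?_
  simp only [seriesIntegral, coeff_mk]
  rw [hX.integral_mul_comp_succ (hZ p.1) (hf p.2) ((hZm p.1).mul (hfm' p.2)).integrable,
    ← integral_mul_const, ← integral_add ((hZm p.1).integrable.mul_const _)
      ((hZm p.1).mul (hRf p.2)).integrable]
  simp only [centeredOp]
  congr with ω
  ring

variable (hX : IsMarkovChain P Xs π Q) (hQ : Q.Invariant π) (hYmeas : Measurable Y)
  (hY : HasAllMoments Y π)

include hX hQ hYmeas hY

lemma _root_.IsMarkovChain.tiltedMomentSeries_succ (n l : ℕ) :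
    tiltedMomentSeries P Q π Y Xs (n + 1) l =
      momentSeries P Y Xs (n + 1) * seriesIntegral π (tiltedIterate Q π Y l) +
        tiltedMomentSeries P Q π Y Xs n (l + 1) := by
  have hS : HasAllMoments (fun ω ↦ ∑ i ∈ range (n + 1), Y (Xs i ω)) P :=
    .sum fun i _ ↦ hY.comp (hX.measurePreserving hQ i)
  have hSmeas : Measurable[past Xs n] fun ω ↦ ∑ i ∈ range (n + 1), Y (Xs i ω) :=
    measurable_sum _ fun i hi ↦ hYmeas.comp (measurable_past (mem_range_succ_iff.1 hi))
  rw [tiltedMomentSeries, hX.seriesIntegral_mul_comp_succ hQ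
    (fun k ↦ by simpa only [coeff_rescale_exp] using (hSmeas.pow_const k).div_const _)
    (fun k ↦ by simpa only [coeff_rescale_exp] using hS.pow_div_factorial k)
    (measurable_coeff_tiltedIterate hYmeas l) (hY.coeff_tiltedIterate hQ l)]
  congr 2 with ω : 1
  rw [tiltedIterate, ← mul_assoc, exp_mul_exp_eq_exp_add, sum_range_succ]

lemma _root_.IsMarkovChain.tiltedMomentSeries_eq_sum (n l : ℕ) :
    tiltedMomentSeries P Q π Y Xs n l = ∑ j ∈ range (n + 1),
      seriesIntegral π (tiltedIterate Q π Y (l + j)) * momentSeries P Y Xs (n - j) := by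
  induction n generalizing l with
  | zero => simp [hX.tiltedMomentSeries_zero_left hYmeas, momentSeries_zero]
  | succ n ih =>
    rw [hX.tiltedMomentSeries_succ hQ hYmeas hY, ih,
      sum_range_succ' _ (n + 1), add_comm, mul_comm]
    simp only [add_zero, Nat.sub_zero, Nat.add_sub_add_right, add_assoc, add_comm 1]

lemma _root_.IsMarkovChain.momentSeries_succ (n : ℕ) :
    momentSeries P Y Xs (n + 1) = momentSeries P Y Xs n +
      ∑ l ∈ range (n + 1), renewalKernel Q π Y l * momentSeries P Y Xs (n - l) := by
  rw [← tiltedMomentSeries_zero_right (Q := Q) (π := π),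
    hX.tiltedMomentSeries_eq_sum hQ hYmeas hY]
  simp [renewalKernel, sub_mul, ite_mul]

end RenewalEquation

section WeightedSupNorm

variable {X : Type*} {U f : X → ℝ}

lemma vnorm_nonneg (hU : ∀ x, 0 ≤ U x) : 0 ≤ vnorm U f :=
  Real.iSup_nonneg fun x ↦ div_nonneg (abs_nonneg _) (hU x)

variable [MeasurableSpace X]

lemma _root_.MemL.abs_le (hf : MemL U f) {x : X} (hU : 0 < U x) : |f x| ≤ vnorm U f * U x :=
  (div_le_iff₀ hU).1 (le_ciSup hf.bdd x)

lemma _root_.MemL.sub_const (hf : MemL U f) (hU : ∀ x, 1 ≤ U x) (a : ℝ) :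
    MemL U fun x ↦ f x - a := by
  refine ⟨hf.meas.sub_const a, vnorm U f + |a|, ?_⟩
  rintro _ ⟨x, rfl⟩
  have hx := zero_lt_one.trans_le (hU x)
  refine (div_le_iff₀ hx).2 ?_
  calc |f x - a| ≤ |f x| + |a| := abs_sub _ _
    _ ≤ vnorm U f * U x + |a| * U x :=
      add_le_add (hf.abs_le hx) (le_mul_of_one_le_right (abs_nonneg a) (hU x))
    _ = (vnorm U f + |a|) * U x := (add_mul _ _ _).symm

lemma _root_.MemL.abs_le_logGrowth_mul {V : X → ℝ} {γ : ℝ} (hγ : 0 ≤ γ)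
    (hVe : ∀ x, Real.exp 1 ≤ V x) (hf : MemL (fun x ↦ Real.log (V x) ^ γ) f) {k : ℕ}
    (hk : 1 ≤ k) (x : X) :
    |f x| ≤ vnorm (fun x ↦ Real.log (V x) ^ γ) f * logGrowth γ k * V x ^ (1 / (2 * (k : ℝ))) := by
  have hlog (y : X) : 0 < Real.log (V y) ^ γ := zero_lt_one.trans_le (one_le_log_rpow hγ (hVe y))
  have hV1 : 1 ≤ V x := (Real.one_le_exp zero_le_one).trans (hVe x)
  rw [mul_assoc]
  exact (hf.abs_le (hlog x)).trans <| mul_le_mul_of_nonneg_left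
    (log_rpow_le_logGrowth_mul hγ hV1 hk) (vnorm_nonneg fun y ↦ (hlog y).le)

end WeightedSupNorm

section Rosenthal

variable {X Ω : Type*} [MeasurableSpace X] [MeasurableSpace Ω] {P : Measure Ω}
  {Xs : ℕ → Ω → X} {Q : Kernel X X} {π : Measure X} {V Y : X → ℝ} {c ρ γ N : ℝ} {s : ℕ → ℝ}

variable [IsProbabilityMeasure π]

lemma IsGeometricallyErgodic.hasAllMoments (h : IsGeometricallyErgodic Q V c ρ π)
    (hY : Measurable Y)
    (hYV : ∀ k : ℕ, 1 ≤ k → ∀ x, |Y x| ≤ s k * V x ^ (1 / (2 * (k : ℝ)))) :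
    HasAllMoments Y π := by
  refine hasAllMoments_of_integrable_pow hY.aestronglyMeasurable fun k ↦ ?_
  rcases k.eq_zero_or_pos with rfl | hk
  · simp
  refine ((h.integrable_rpow one_half_lt_one.le).const_mul (s k ^ k)).mono'
    (hY.abs.pow_const k).aestronglyMeasurable (ae_of_all _ fun x ↦ ?_)
  have hVx := h.one_le x
  calc ‖|Y x| ^ k‖ = |Y x| ^ k := Real.norm_of_nonneg (by positivity)
    _ ≤ (s k * V x ^ (1 / (2 * (k : ℝ)))) ^ k := by gcongr; exact hYV k hk x
    _ = s k ^ k * V x ^ ((1 : ℝ) / 2) := by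
      rw [mul_pow, ← Real.rpow_mul_natCast (by positivity)]
      congr 2
      field_simp

variable [IsProbabilityMeasure P] [IsMarkovKernel Q]

lemma isDominatedRenewal_momentSeries (hX : IsMarkovChain P Xs π Q)
    (h : IsGeometricallyErgodic Q V c ρ π) (hY : Measurable Y) (hY0 : ∫ x, Y x ∂π = 0)
    (hs : ∀ k, 0 ≤ s k)
    (hYV : ∀ k : ℕ, 1 ≤ k → ∀ x, |Y x| ≤ s k * V x ^ (1 / (2 * (k : ℝ)))) :
    IsDominatedRenewal (momentSeries P Y Xs) (renewalKernel Q π Y)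
      (cumulantSeries s (2 * c * ∫ x, V x ∂π) ρ) (lagBound s (2 * c * ∫ x, V x ∂π) ρ) := by
  have hYm := h.hasAllMoments hY hYV
  refine ⟨momentSeries_zero, hX.momentSeries_succ h.invariant hY hYm,
    X_sq_dvd_cumulantSeries _ _ _, fun k N ↦ ?_, ?_⟩
  · obtain hk | hk := lt_or_ge k 2
    · simp [PowerSeries.X_pow_dvd_iff.1 (X_sq_dvd_renewalKernel h.invariant hYm hY0 _) k hk,
        PowerSeries.X_pow_dvd_iff.1 (X_sq_dvd_cumulantSeries _ _ _) k hk]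
    · rw [coeff_cumulantSeries hk]
      exact h.sum_abs_coeff_renewalKernel_le hYm hs hYV (one_le_two.trans hk) N
  · rw [coeff_cumulantSeries le_rfl]
    exact h.sum_lag_renewalKernel_le hYm hs hYV

theorem integral_sum_pow_two_mul_le (hX : IsMarkovChain P Xs π Q)
    (h : IsGeometricallyErgodic Q V c ρ π) (hY : Measurable Y) (hY0 : ∫ x, Y x ∂π = 0)
    (hγ : 0 ≤ γ) (hN : 0 ≤ N)
    (hYV : ∀ k : ℕ, 1 ≤ k → ∀ x, |Y x| ≤ N * logGrowth γ k * V x ^ (1 / (2 * (k : ℝ))))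
    {q : ℕ} (hq : 1 ≤ q) (n : ℕ) :
    ∫ ω, (∑ i ∈ range n, Y (Xs i ω)) ^ (2 * q) ∂P ≤
      gaussMoment q * (∫ ω, (∑ i ∈ range n, Y (Xs i ω)) ^ 2 ∂P) ^ q +
        (2 * c * ∫ x, V x ∂π) ^ (2 * q) * (2 * γ) ^ (2 * γ * q) * N ^ (2 * q) *
          ∑ u ∈ Icc 1 (q - 1), Bcoef γ u q * (n : ℝ) ^ u /
            (ρ ^ ((u : ℝ) / 2) * Real.log (1 / ρ) ^ (2 * q - u)) := by
  have hC : 0 ≤ 2 * c * ∫ x, V x ∂π := zero_le_two.trans h.two_le_const_mul_integral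
  have hmain := (isDominatedRenewal_momentSeries hX h hY hY0
    (fun k ↦ mul_nonneg hN (logGrowth_nonneg hγ k)) hYV).coeff_two_mul_le
    (fun k hk ↦ (coeff_cumulantSeries hk).symm ▸
      cumulantBound_add_lagBound_le hN hγ hC h.rate_pos h.rate_lt_one hk) hq n
  rw [coeff_momentSeries, coeff_momentSeries, div_le_iff₀' (by positivity), mul_add, mul_sum,
    sum_congr rfl fun u _ ↦ factorial_mul_sum_prod_partWeight hγ h.rate_pos u q n,
    ← mul_sum] at hmain
  refine hmain.trans_eq (congrArg (· + _) ?_)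
  rw [gaussMoment, div_pow, Nat.factorial_two, Nat.cast_ofNat]
  field_simp

end Rosenthal

end RosenthalLog

theorem rosenthal_log_V_general {X : Type*} [MeasurableSpace X] {Q : Kernel X X}
    [IsMarkovKernel Q] {V : X → ℝ} {c ρ : ℝ} {π : Measure X} [IsProbabilityMeasure π]
    (h : RosenthalLog.IsGeometricallyErgodic Q V c ρ π) (hVe : ∀ x, Real.exp 1 ≤ V x)
    {γ : ℝ} (hγ : 0 ≤ γ) {q : ℕ} (hq : 1 ≤ q) {g : X → ℝ}
    (hg : MemL (fun x ↦ Real.log (V x) ^ γ) g) (n : ℕ)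
    {Ω : Type*} [MeasurableSpace Ω] {P : Measure Ω} [IsProbabilityMeasure P]
    {Xs : ℕ → Ω → X} (hX : IsMarkovChain P Xs π Q) :
    (∫ ω, |∑ ℓ ∈ range n, (g (Xs ℓ ω) - ∫ x, g x ∂π)| ^ (2 * q) ∂P) ≤
      gaussMoment q * (∫ ω, (∑ ℓ ∈ range n, (g (Xs ℓ ω) - ∫ x, g x ∂π)) ^ 2 ∂P) ^ q +
        (2 * c * ∫ x, V x ∂π) ^ (2 * q) * (2 * γ) ^ (2 * γ * q) *
          vnorm (fun x ↦ Real.log (V x) ^ γ) (fun x ↦ g x - ∫ y, g y ∂π) ^ (2 * q) *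
          ∑ u ∈ Icc 1 (q - 1), Bcoef γ u q * (n : ℝ) ^ u /
            (ρ ^ ((u : ℝ) / 2) * Real.log (1 / ρ) ^ (2 * q - u)) := by
  have hlog (x : X) : 1 ≤ Real.log (V x) ^ γ := RosenthalLog.one_le_log_rpow hγ (hVe x)
  have hgint : Integrable g π :=
    (h.hasAllMoments hg.meas fun k hk ↦ hg.abs_le_logGrowth_mul hγ hVe hk).integrable
  have hY : MemL (fun x ↦ Real.log (V x) ^ γ) fun x ↦ g x - ∫ y, g y ∂π := hg.sub_const hlog _
  have hY0 : ∫ x, (g x - ∫ y, g y ∂π) ∂π = 0 := by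
    simp [integral_sub hgint (integrable_const _)]
  simp only [(even_two_mul q).pow_abs]
  exact RosenthalLog.integral_sum_pow_two_mul_le hX h hY.meas hY0 hγ
    (RosenthalLog.vnorm_nonneg fun x ↦ zero_le_one.trans (hlog x))
    (fun k hk ↦ hY.abs_le_logGrowth_mul hγ hVe hk) hq n

/-- Theorem 3 (Rosenthal-type inequality, stationary chain, class `L_{W^γ}`, `W = log V`). -/
theorem rosenthal_log_V
    {X : Type*} [MeasurableSpace X]
    (Q : ProbabilityTheory.Kernel X X) [ProbabilityTheory.IsMarkovKernel Q]
    (V : X → ℝ) (lam b : ℝ) (m : ℕ) (eps d c ρ : ℝ) (piQ : Measure X)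
    [IsProbabilityMeasure piQ]
    -- Assumption A1
    (hV : Measurable V) (hVe : ∀ x, Real.exp 1 ≤ V x)
    (hlam0 : 0 < lam) (hlam1 : lam < 1) (hb : 0 ≤ b)
    (hdrift : ∀ x, ∫ y, V y ∂(Q x) ≤ lam * V x + b)
    -- Assumption A2
    (hm : 1 ≤ m) (heps0 : 0 < eps) (heps1 : eps < 1) (hd : 0 ≤ d)
    (hsmallcond : lam + 2 * b / (1 + d) < 1)
    (hsmall : ∃ ν : Measure X, IsProbabilityMeasure ν ∧
      ∀ x, V x ≤ d → ∀ A : Set X, MeasurableSet A →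
        ENNReal.ofReal eps * ν A ≤ (kIter Q m) x A)
    -- piQ is the unique invariant probability measure, with piQ(V) < ∞
    (hinv : piQ.bind (fun x => Q x) = piQ)
    (huniq : ∀ π' : Measure X, IsProbabilityMeasure π' →
      π'.bind (fun x => Q x) = π' → π' = piQ)
    (hpiV : Integrable V piQ)
    -- geometric ergodicity constants c ≥ 1, ρ ∈ (0,1)
    (hc : 1 ≤ c) (hρ0 : 0 < ρ) (hρ1 : ρ < 1)
    (herg : ∀ ξ : Measure X, IsProbabilityMeasure ξ → Integrable V ξ → ∀ k : ℕ,
      wTV V (ξ.bind (fun x => (kIter Q k) x)) piQ ≤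
        c * ((∫ x, V x ∂ξ) + ∫ x, V x ∂piQ) * ρ ^ k)
    -- γ, the exponent q and the function g ∈ L_{W^γ}
    (γ : ℝ) (hγ : 0 ≤ γ) (q : ℕ) (hq : 1 ≤ q)
    (g : X → ℝ) (hg : MemL (fun x => Real.log (V x) ^ γ) g)
    (n : ℕ) (hn : 1 ≤ n)
    -- the stationary canonical chain
    {Ω : Type*} [MeasurableSpace Ω] (P : Measure Ω) [IsProbabilityMeasure P]
    (Xs : ℕ → Ω → X) (hchain : IsMarkovChain P Xs piQ Q) :
    (∫ ω, |∑ ℓ ∈ Finset.range n, (g (Xs ℓ ω) - ∫ x, g x ∂piQ)| ^ (2 * q) ∂P) ≤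
      gaussMoment q *
        (∫ ω, (∑ ℓ ∈ Finset.range n, (g (Xs ℓ ω) - ∫ x, g x ∂piQ)) ^ 2 ∂P) ^ q
      + (2 * c * ∫ x, V x ∂piQ) ^ (2 * q) * (2 * γ) ^ (2 * γ * q) *
          vnorm (fun x => Real.log (V x) ^ γ)
            (fun x => g x - ∫ y, g y ∂piQ) ^ (2 * q) *
          ∑ u ∈ Finset.Icc 1 (q - 1),
            Bcoef γ u q * (n : ℝ) ^ u /
              (ρ ^ ((u : ℝ) / 2) * Real.log (1 / ρ) ^ (2 * q - u)) := by
  have h : RosenthalLog.IsGeometricallyErgodic Q V c ρ piQ :=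
    .of_forall_measure hV
      (fun x ↦ (Real.one_le_exp zero_le_one).trans (hVe x)) hinv hpiV hc hρ0 hρ1 herg
  exact rosenthal_log_V_general h hVe hγ hq hg n hchain
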